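/- arXiv:1212.5832 — 3 statements merged into one kernel-verified Lean document; each statement's English description precedes it below -/
import Mathlib

section
/- (Proposition 1) Let Q be an affine quiver, k a field, and X a finite-dimensional representation of Q over k. Then the following are equivalent: (i) every indecomposable direct summand Z of X satisfies ∂(dim Z) = 0 (i.e., X is a regular representation); (ii) ∂(dim X) = 0 and ∂(dim Y) ≤ 0 for every subrepresentation Y ⊆ X. -/
open scoped BigOperators

/-- A finite quiver: finite sets of vertices and arrows with source and target maps. -/
structure FinQuiver where
  V : Type
  A : Type
  [fintypeV : Fintype V]
  [fintypeA : Fintype A]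
  [decEqV : DecidableEq V]
  src : A → V
  tgt : A → V

attribute [instance] FinQuiver.fintypeV FinQuiver.fintypeA FinQuiver.decEqV

namespace FinQuiver

variable (Q : FinQuiver)

/-- The Euler form of a finite quiver. -/
def eulerForm (x y : Q.V → ℤ) : ℤ :=
  (∑ i : Q.V, x i * y i) - ∑ a : Q.A, x (Q.src a) * y (Q.tgt a)

/-- The Tits form of a finite quiver. -/
def titsForm (x : Q.V → ℤ) : ℤ := Q.eulerForm x x

/-- The quiver has no loops. -/
def NoLoops : Prop := ∀ a : Q.A, Q.src a ≠ Q.tgt a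

/-- The underlying (simple) graph of a quiver without loops. -/
def graph : SimpleGraph Q.V where
  Adj i j := i ≠ j ∧ ∃ a : Q.A, (Q.src a = i ∧ Q.tgt a = j) ∨ (Q.src a = j ∧ Q.tgt a = i)
  symm := by
    constructor
    rintro i j ⟨hij, a, h⟩
    exact ⟨hij.symm, a, h.symm⟩
  loopless := by
    constructor
    rintro i ⟨hii, -⟩
    exact hii rfl

/-- The quiver has no oriented cycles. -/
def Acyclic : Prop :=
  ¬ ∃ (n : ℕ) (g : Fin (n + 1) → Q.A), ∀ k, Q.tgt (g k) = Q.src (g (k + 1))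

/-- The double quiver: for each arrow `a : i → j` add a reverse arrow `a* : j → i`. -/
def double : FinQuiver where
  V := Q.V
  A := Q.A ⊕ Q.A
  src := Sum.elim Q.src Q.tgt
  tgt := Sum.elim Q.tgt Q.src

/-- Positive roots: nonzero, nonnegative integer vectors with Tits form at most 1. -/
def PosRoot (x : Q.V → ℤ) : Prop := (∀ i, 0 ≤ x i) ∧ x ≠ 0 ∧ Q.titsForm x ≤ 1

end FinQuiver

/-- An affine quiver: connected, no loops, no oriented cycles, Tits form positive
semidefinite but not positive definite; `δ` is the minimal positive imaginary root,
generating the radical of the symmetrized Euler form. -/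
structure AffineQuiver extends FinQuiver where
  noLoops : toFinQuiver.NoLoops
  connected : toFinQuiver.graph.Connected
  acyclic : toFinQuiver.Acyclic
  posSemidef : ∀ x : V → ℤ, 0 ≤ toFinQuiver.titsForm x
  notPosDef : ∃ x : V → ℤ, x ≠ 0 ∧ toFinQuiver.titsForm x = 0
  δ : V → ℤ
  delta_pos : ∀ i, 0 < δ i
  radical_iff : ∀ x : V → ℤ,
    (∀ y : V → ℤ, toFinQuiver.eulerForm x y + toFinQuiver.eulerForm y x = 0) ↔
      ∃ m : ℤ, x = m • δ

/-- The defect `∂(x) = e(δ, x)`. -/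
def AffineQuiver.defect (Q : AffineQuiver) (x : Q.V → ℤ) : ℤ :=
  Q.eulerForm Q.δ x

/-- A finite-dimensional representation of a finite quiver over a field `k`. -/
structure QRep (Q : FinQuiver) (k : Type) [Field k] where
  carrier : Q.V → Type
  [acgI : ∀ i, AddCommGroup (carrier i)]
  [modI : ∀ i, Module k (carrier i)]
  [fdI : ∀ i, FiniteDimensional k (carrier i)]
  map : ∀ a : Q.A, carrier (Q.src a) →ₗ[k] carrier (Q.tgt a)

attribute [instance] QRep.acgI QRep.modI QRep.fdI

namespace QRep

variable {Q : FinQuiver} {k : Type} [Field k]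

/-- The dimension vector of a representation. -/
noncomputable def dimVec (X : QRep Q k) : Q.V → ℤ :=
  fun i => (Module.finrank k (X.carrier i) : ℤ)

end QRep

/-- A subrepresentation: a family of subspaces stable under all the arrow maps. -/
structure SubRep {Q : FinQuiver} {k : Type} [Field k] (X : QRep Q k) where
  mod : ∀ i, Submodule k (X.carrier i)
  stable : ∀ a : Q.A, ∀ x ∈ mod (Q.src a), X.map a x ∈ mod (Q.tgt a)

namespace SubRep

variable {Q : FinQuiver} {k : Type} [Field k] {X : QRep Q k}

/-- The dimension vector of a subrepresentation. -/
noncomputable def dimVec (U : SubRep X) : Q.V → ℤ :=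
  fun i => (Module.finrank k (U.mod i) : ℤ)

/-- The representation carried by a subrepresentation. -/
def toRep (U : SubRep X) : QRep Q k where
  carrier i := U.mod i
  map a := (X.map a).restrict (U.stable a)

end SubRep

namespace QRep

variable {Q : FinQuiver} {k : Type} [Field k]

/-- The quotient representation by a subrepresentation. -/
def quotBy (X : QRep Q k) (U : SubRep X) : QRep Q k where
  carrier i := X.carrier i ⧸ U.mod i
  map a := Submodule.mapQ _ _ (X.map a) (fun x hx => U.stable a x hx)

/-- A representation is indecomposable if it is nonzero and is not the internal direct
sum of two nonzero subrepresentations. -/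
def Indecomposable (X : QRep Q k) : Prop :=
  (∃ i, 0 < Module.finrank k (X.carrier i)) ∧
    ∀ U W : SubRep X, (∀ i, IsCompl (U.mod i) (W.mod i)) →
      (∀ i, U.mod i = ⊥) ∨ (∀ i, W.mod i = ⊥)

end QRep

/-- An isomorphism of representations of a quiver. -/
structure RepIso {Q : FinQuiver} {k : Type} [Field k] (X Y : QRep Q k) where
  equiv : ∀ i, X.carrier i ≃ₗ[k] Y.carrier i
  comm : ∀ (a : Q.A) (x : X.carrier (Q.src a)),
    equiv (Q.tgt a) (X.map a x) = Y.map a (equiv (Q.src a) x)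

section Preprojective

variable {Q : FinQuiver} {k : Type} [Field k]

/-- The endomorphism of `⊕ᵢ Xᵢ` induced by the map attached to a single arrow. -/
def arrowEnd (X : QRep Q k) (a : Q.A) :
    (∀ i, X.carrier i) →ₗ[k] (∀ i, X.carrier i) :=
  (LinearMap.single k X.carrier (Q.tgt a)).comp
    ((X.map a).comp (LinearMap.proj (Q.src a)))

/-- The preprojective relation for a representation of the double quiver:
at every vertex, `∑_{t(a)=i} X_a ∘ X_{a*} − ∑_{s(a)=i} X_{a*} ∘ X_a = 0`.
(Stated as one equation of endomorphisms of `⊕ᵢ Xᵢ`, which is equivalent since the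
`i`-component of the equation is exactly the relation at the vertex `i`.) -/
def PreprojRel (Q : FinQuiver) {k : Type} [Field k] (X : QRep Q.double k) : Prop :=
  (∑ a : Q.A, (arrowEnd X (Sum.inl a)).comp (arrowEnd X (Sum.inr a)))
    = ∑ a : Q.A, (arrowEnd X (Sum.inr a)).comp (arrowEnd X (Sum.inl a))

/-- Forget the reverse arrows: a representation of `Π_Q` gives a representation of `Q`. -/
def rho (X : QRep Q.double k) : QRep Q k where
  carrier := X.carrier
  acgI := X.acgI
  modI := X.modI
  fdI := X.fdI
  map a := X.map (Sum.inl a)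

/-- A subrepresentation of a `Π_Q`-representation is in particular a subrepresentation of
the underlying `Q`-representation. -/
def rhoSub {X : QRep Q.double k} (U : SubRep X) : SubRep (rho X) where
  mod := U.mod
  stable a x hx := U.stable (Sum.inl a) x hx

/-- A representation of the double quiver is ρ-fixed if all reverse arrows act as zero. -/
def RhoFixed (X : QRep Q.double k) : Prop :=
  ∀ a : Q.A, X.map (Sum.inr a) = 0

/-- Extend a representation of `Q` to the double quiver by letting all reverse arrows
act as zero. -/
def extendZero (P : QRep Q k) : QRep Q.double k where
  carrier := P.carrier
  acgI := P.acgI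
  modI := P.modI
  fdI := P.fdI
  map b := match b with
    | Sum.inl a => P.map a
    | Sum.inr _ => 0

end Preprojective

section SubQuot

variable {Q : FinQuiver} {k : Type} [Field k]

/-- The subquotient representation `W / U` attached to nested subrepresentations
`U ≤ W` of `Z`. -/
def subQuot (Z : QRep Q k) (U W : SubRep Z) (h : ∀ i, U.mod i ≤ W.mod i) : QRep Q k where
  carrier i := ↥(W.mod i) ⧸ (U.mod i).comap (W.mod i).subtype
  map a := Submodule.mapQ _ _ (W.toRep.map a)
    (fun x hx => U.stable a x.1 hx)

end SubQuot

/-!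
Write `θ = e(δ, -)`. If `X` is regular, it suffices to find a direct summand of `X` at which `θ`
attains its maximum over all subrepresentations, since `θ` vanishes on every direct summand. Take
`Y` maximizing `θ` and, among the maximizers, minimal; then `θ < θ(Y)` on proper subrepresentations
of `Y`, and `θ ≤ 0` on subrepresentations of `Z = X / Y`. The summand is obtained by proving
`Ext¹(Z, Y) = 0`.

By the trace pairing, `Ext¹(Z, Y)` is dual to the space of families `ξₐ : Y_{t(a)} → Z_{s(a)}`
satisfying the preprojective relation `∑_{s(a)=i} ξₐ Yₐ = ∑_{t(a)=i} Zₐ ξₐ` at every vertex `i`.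
This relation says that `Yᵢ → ⨁_{s(a)=i} Y_{t(a)} ⊕ ⨁_{t(a)=i} Z_{s(a)} → Zᵢ` is a complex. Let `K`
be the largest subrepresentation of `Y` killed by `ξ` and `L` the subrepresentation of `Z` generated
by its image. After replacing `Y` by `Y / K` and `Z` by `L`, the first map is injective and the
second surjective; summing the dimension inequalities with the weights `δᵢ ≥ 0` gives
`θ(Y) - θ(K) + e(L, δ) ≤ 0`. As `e(L, δ) = -θ(L)` for radical `δ`, this reads
`θ(Y) ≤ θ(K) + θ(L) ≤ θ(K)`, which forces `K = Y` and `ξ = 0`.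
-/

section LinearAlgebra

variable {k : Type*} [Field k]

lemma finrank_add_finrank_le_of_comp_eq_zero {A B C : Type*} [AddCommGroup A] [Module k A]
    [AddCommGroup B] [Module k B] [FiniteDimensional k B] [AddCommGroup C] [Module k C]
    {f : A →ₗ[k] B} {g : B →ₗ[k] C} (hf : Function.Injective f) (hg : Function.Surjective g)
    (hgf : g ∘ₗ f = 0) :
    Module.finrank k A + Module.finrank k C ≤ Module.finrank k B := by
  rw [← LinearMap.finrank_range_of_inj hf, ← LinearMap.finrank_range_add_finrank_ker g,
    LinearMap.range_eq_top.mpr hg, finrank_top, add_comm]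
  gcongr
  exact Submodule.finrank_mono (LinearMap.range_le_ker_iff.mpr hgf)

lemma finrank_comap_mkQ {V : Type*} [AddCommGroup V] [Module k V] [FiniteDimensional k V]
    (U : Submodule k V) (L : Submodule k (V ⧸ U)) :
    Module.finrank k (L.comap U.mkQ) = Module.finrank k L + Module.finrank k U := by
  have h := (U.mkQ.domRestrict (L.comap U.mkQ)).finrank_range_add_finrank_ker
  rw [LinearMap.range_domRestrict, Submodule.map_comap_eq_of_surjective U.mkQ_surjective,
    LinearMap.ker_domRestrict, Submodule.ker_mkQ,
    (Submodule.comapSubtypeEquivOfLe (U.le_comap_mkQ L)).finrank_eq] at h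
  exact h.symm

section TraceDuality

variable {V W : Type*} [AddCommGroup V] [Module k V] [AddCommGroup W] [Module k W]
  [FiniteDimensional k W]

lemma trace_comp_smulRight (ξ : V →ₗ[k] W) (f : Module.Dual k W) (v : V) :
    LinearMap.trace k W (ξ ∘ₗ f.smulRight v) = f (ξ v) := by
  have h : ξ ∘ₗ f.smulRight v = f.smulRight (ξ v) := by
    ext w
    exact map_smul ξ (f w) v
  rw [h, LinearMap.trace_smulRight]

lemma eq_zero_of_forall_trace_comp_eq_zero {ξ : V →ₗ[k] W}
    (h : ∀ φ : W →ₗ[k] V, LinearMap.trace k W (ξ ∘ₗ φ) = 0) : ξ = 0 :=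
  LinearMap.ext fun v => (Module.forall_dual_apply_eq_zero_iff k _).mp fun f =>
    (trace_comp_smulRight ξ f v).symm.trans (h (f.smulRight v))

variable [FiniteDimensional k V]

lemma exists_forall_eq_trace_comp (l : Module.Dual k (W →ₗ[k] V)) :
    ∃ ξ : V →ₗ[k] W, ∀ φ, l φ = LinearMap.trace k W (ξ ∘ₗ φ) := by
  let T : (V →ₗ[k] W) →ₗ[k] Module.Dual k (W →ₗ[k] V) :=
    (LinearMap.llcomp k W V W).compr₂ (LinearMap.trace k W)
  have hT : Function.Injective T := (injective_iff_map_eq_zero T).mpr fun ξ hξ =>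
    eq_zero_of_forall_trace_comp_eq_zero (LinearMap.congr_fun hξ)
  have hfinrank : Module.finrank k (V →ₗ[k] W) =
      Module.finrank k (Module.Dual k (W →ₗ[k] V)) := by
    rw [Subspace.dual_finrank_eq, Module.finrank_linearMap, Module.finrank_linearMap, mul_comm]
  obtain ⟨ξ, hξ⟩ := (LinearMap.injective_iff_surjective_of_finrank_eq_finrank hfinrank).mp hT l
  exact ⟨ξ, fun φ => (LinearMap.congr_fun hξ φ).symm⟩

end TraceDuality

lemma exists_forall_eq_sum_trace_comp {ι : Type*} [Fintype ι] {V W : ι → Type*}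
    [∀ a, AddCommGroup (V a)] [∀ a, Module k (V a)] [∀ a, FiniteDimensional k (V a)]
    [∀ a, AddCommGroup (W a)] [∀ a, Module k (W a)] [∀ a, FiniteDimensional k (W a)]
    (l : Module.Dual k (∀ a, W a →ₗ[k] V a)) :
    ∃ ξ : ∀ a, V a →ₗ[k] W a, ∀ φ, l φ = ∑ a, LinearMap.trace k (W a) (ξ a ∘ₗ φ a) := by
  classical
  choose ξ hξ using fun a =>
    exists_forall_eq_trace_comp (l ∘ₗ LinearMap.single k (fun a => W a →ₗ[k] V a) a)
  refine ⟨ξ, fun φ => ?_⟩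
  rw [← Finset.univ_sum_single φ, map_sum, Finset.univ_sum_single]
  exact Finset.sum_congr rfl fun a _ => hξ a (φ a)

end LinearAlgebra

namespace FinQuiver

variable {Q : FinQuiver}

/-- The Euler form `e(x, -)` as a homomorphism, so that additivity comes for free. -/
def eulerHom (x : Q.V → ℤ) : (Q.V → ℤ) →+ ℤ :=
  AddMonoidHom.mk' (Q.eulerForm x) fun y z => by
    simp only [eulerForm, Pi.add_apply, mul_add, Finset.sum_add_distrib]
    ring

lemma eulerHom_apply (x y : Q.V → ℤ) : eulerHom x y = Q.eulerForm x y :=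
  rfl

end FinQuiver

namespace SubRep

variable {Q : FinQuiver} {k : Type} [Field k] {X : QRep Q k}

lemma mod_injective : Function.Injective (mod : SubRep X → ∀ i, Submodule k (X.carrier i)) := by
  rintro ⟨_, _⟩ ⟨_, _⟩ rfl
  rfl

lemma le_comap (U : SubRep X) (a : Q.A) :
    U.mod (Q.src a) ≤ (U.mod (Q.tgt a)).comap (X.map a) :=
  U.stable a

/-- Subrepresentations are ordered by vertexwise inclusion; the lattice operations are the
vertexwise ones. -/
instance : CompleteLattice (SubRep X) :=
  letI : Max (SubRep X) := ⟨fun U W => ⟨U.mod ⊔ W.mod, fun a => sup_le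
    ((U.le_comap a).trans (Submodule.comap_mono le_sup_left))
    ((W.le_comap a).trans (Submodule.comap_mono le_sup_right))⟩⟩
  letI : Min (SubRep X) := ⟨fun U W => ⟨U.mod ⊓ W.mod, fun a _ hx =>
    ⟨U.stable a _ hx.1, W.stable a _ hx.2⟩⟩⟩
  letI : LE (SubRep X) := ⟨fun U W => U.mod ≤ W.mod⟩
  letI : LT (SubRep X) := ⟨fun U W => U.mod < W.mod⟩
  letI : SupSet (SubRep X) := ⟨fun S => ⟨⨆ U ∈ S, U.mod, fun a => by
    have h : ⨆ U ∈ S, U.mod (Q.src a) ≤ (⨆ U ∈ S, U.mod (Q.tgt a)).comap (X.map a) :=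
      iSup₂_le fun U hU => (U.le_comap a).trans
        (Submodule.comap_mono (le_iSup₂_of_le U hU le_rfl))
    simp only [iSup_apply]
    exact fun x hx => h hx⟩⟩
  letI : InfSet (SubRep X) := ⟨fun S => ⟨⨅ U ∈ S, U.mod, fun a x hx => by
    simp only [iInf_apply, Submodule.mem_iInf] at hx ⊢
    exact fun U hU => U.stable a x (hx U hU)⟩⟩
  letI : Top (SubRep X) := ⟨⟨⊤, fun _ _ _ => trivial⟩⟩
  letI : Bot (SubRep X) := ⟨⟨⊥, fun a => bot_le (a := Submodule.comap (X.map a) ⊥)⟩⟩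
  mod_injective.completeLattice mod Iff.rfl Iff.rfl (fun _ _ => rfl) (fun _ _ => rfl)
    (fun _ => rfl) (fun _ => rfl) rfl rfl

lemma mod_sSup (S : Set (SubRep X)) (i : Q.V) : (sSup S).mod i = ⨆ U ∈ S, U.mod i := by
  have h : (sSup S).mod = ⨆ U ∈ S, U.mod := rfl
  simp only [h, iSup_apply]

lemma mod_sInf (S : Set (SubRep X)) (i : Q.V) : (sInf S).mod i = ⨅ U ∈ S, U.mod i := by
  have h : (sInf S).mod = ⨅ U ∈ S, U.mod := rfl
  simp only [h, iInf_apply]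

lemma mod_strictMono : StrictMono (mod : SubRep X → ∀ i, Submodule k (X.carrier i)) :=
  fun _ _ h => h

instance : WellFoundedLT (SubRep X) := mod_strictMono.wellFoundedLT

instance : IsModularLattice (SubRep X) :=
  ⟨fun {_} W _ hUV i => sup_inf_le_assoc_of_le (W.mod i) (hUV i)⟩

lemma disjoint_iff_forall {U W : SubRep X} :
    Disjoint U W ↔ ∀ i, Disjoint (U.mod i) (W.mod i) := by
  simp only [disjoint_iff, ← mod_injective.eq_iff, funext_iff]
  rfl

lemma isCompl_iff_forall {U W : SubRep X} :
    IsCompl U W ↔ ∀ i, IsCompl (U.mod i) (W.mod i) := by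
  rw [isCompl_iff, disjoint_iff_forall, codisjoint_iff, ← mod_injective.eq_iff, funext_iff,
    ← forall_and]
  simp only [isCompl_iff, codisjoint_iff]
  rfl

lemma dimVec_nonneg (U : SubRep X) : 0 ≤ U.dimVec := fun _ => Int.natCast_nonneg _

lemma dimVec_le (U : SubRep X) : U.dimVec ≤ X.dimVec := fun i =>
  Int.ofNat_le.mpr (U.mod i).finrank_le

lemma dimVec_bot : (⊥ : SubRep X).dimVec = 0 :=
  funext fun i => congrArg Nat.cast (finrank_bot k (X.carrier i))

lemma dimVec_top : (⊤ : SubRep X).dimVec = X.dimVec :=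
  funext fun i => congrArg Nat.cast (finrank_top k (X.carrier i))

lemma dimVec_sup {U W : SubRep X} (h : Disjoint U W) : (U ⊔ W).dimVec = U.dimVec + W.dimVec := by
  funext i
  have hi := Submodule.finrank_sup_add_finrank_inf_eq (U.mod i) (W.mod i)
  rw [(disjoint_iff_forall.mp h i).eq_bot, finrank_bot, add_zero] at hi
  exact (congrArg Nat.cast hi).trans (Nat.cast_add _ _)

lemma dimVec_add_of_isCompl {U W : SubRep X} (h : IsCompl U W) :
    U.dimVec + W.dimVec = X.dimVec := by
  rw [← dimVec_sup h.disjoint, h.sup_eq_top, dimVec_top]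

lemma dimVec_quotBy (U : SubRep X) : (X.quotBy U).dimVec = X.dimVec - U.dimVec :=
  funext fun i => eq_sub_of_add_eq <|
    (Nat.cast_add _ _).symm.trans (congrArg Nat.cast (U.mod i).finrank_quotient_add_finrank)

/-- A subrepresentation of `U`, seen as a subrepresentation of the ambient representation. -/
def mapSubtype (U : SubRep X) (A : SubRep U.toRep) : SubRep X where
  mod i := (A.mod i).map (U.mod i).subtype
  stable := by
    rintro a _ ⟨x, hx, rfl⟩
    exact ⟨U.toRep.map a x, A.stable a x hx, rfl⟩

/-- The preimage in `X` of a subrepresentation of `X / U`. -/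
def comapMkQ (U : SubRep X) (L : SubRep (X.quotBy U)) : SubRep X where
  mod i := (L.mod i).comap (U.mod i).mkQ
  stable a _ hx := L.stable a _ hx

section MapSubtype

variable (U : SubRep X)

lemma mapSubtype_injective : Function.Injective U.mapSubtype := fun _ _ h =>
  mod_injective <| funext fun i =>
    Submodule.map_injective_of_injective (U.mod i).subtype_injective
      (congrFun (congrArg mod h) i)

lemma mapSubtype_bot : U.mapSubtype ⊥ = ⊥ :=
  mod_injective <| funext fun _ => Submodule.map_bot _

lemma mapSubtype_top : U.mapSubtype ⊤ = U :=
  mod_injective <| funext fun i => Submodule.map_subtype_top (U.mod i)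

lemma mapSubtype_sup (A B : SubRep U.toRep) :
    U.mapSubtype (A ⊔ B) = U.mapSubtype A ⊔ U.mapSubtype B :=
  mod_injective <| funext fun i => Submodule.map_sup (A.mod i) (B.mod i) _

lemma mapSubtype_lt {A : SubRep U.toRep} (hA : A < ⊤) : U.mapSubtype A < U :=
  lt_of_le_of_ne (fun i => Submodule.map_subtype_le (U.mod i) (A.mod i)) fun h =>
    hA.ne (U.mapSubtype_injective (h.trans U.mapSubtype_top.symm))

lemma disjoint_mapSubtype {A B : SubRep U.toRep} (h : Disjoint A B) :
    Disjoint (U.mapSubtype A) (U.mapSubtype B) :=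
  disjoint_iff_forall.mpr fun i =>
    Submodule.disjoint_map (U.mod i).subtype_injective (disjoint_iff_forall.mp h i)

lemma dimVec_mapSubtype (A : SubRep U.toRep) : (U.mapSubtype A).dimVec = A.dimVec :=
  funext fun i => congrArg Nat.cast (Submodule.finrank_map_subtype_eq (U.mod i) (A.mod i))

lemma dimVec_comapMkQ (L : SubRep (X.quotBy U)) :
    (U.comapMkQ L).dimVec = L.dimVec + U.dimVec :=
  funext fun i => (congrArg Nat.cast (finrank_comap_mkQ (U.mod i) (L.mod i))).trans
    (Nat.cast_add _ _)

lemma eq_bot_of_comapMkQ_le {L : SubRep (X.quotBy U)} (h : U.comapMkQ L ≤ U) : L = ⊥ := by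
  refine mod_injective <| funext fun i => Submodule.comap_injective_of_surjective
    (U.mod i).mkQ_surjective ?_
  exact ((h i).trans (U.mod i).ker_mkQ.ge).antisymm (LinearMap.ker_le_comap _)

end MapSubtype

lemma indecomposable_toRep {U : SubRep X} (hU : U ≠ ⊥)
    (h : ∀ A B : SubRep X, Disjoint A B → A ⊔ B = U → A = ⊥ ∨ B = ⊥) :
    U.toRep.Indecomposable := by
  have forall_mod_eq_bot {A : SubRep U.toRep} (hA : U.mapSubtype A = ⊥) : ∀ i, A.mod i = ⊥ :=
    congrFun (congrArg mod (U.mapSubtype_injective (hA.trans U.mapSubtype_bot.symm)))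
  refine ⟨?_, fun A B hAB => ?_⟩
  · by_contra! hfinrank
    exact hU <| mod_injective <| funext fun i =>
      Submodule.finrank_eq_zero.mp (Nat.le_zero.mp (hfinrank i))
  · have hAB' := isCompl_iff_forall.mpr hAB
    refine (h (U.mapSubtype A) (U.mapSubtype B) (U.disjoint_mapSubtype hAB'.disjoint) ?_).imp
      forall_mod_eq_bot forall_mod_eq_bot
    rw [← mapSubtype_sup, hAB'.sup_eq_top, mapSubtype_top]

lemma map_dimVec_eq_zero_of_isComplemented (θ : (Q.V → ℤ) →+ ℤ)
    (hθ : ∀ U : SubRep X, IsComplemented U → U.toRep.Indecomposable → θ U.dimVec = 0)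
    {U : SubRep X} (hU : IsComplemented U) : θ U.dimVec = 0 := by
  by_contra hne
  obtain ⟨M, ⟨⟨W, hMW⟩, hM0⟩, hmin⟩ := exists_minimal_of_wellFoundedLT
    (fun U : SubRep X => IsComplemented U ∧ θ U.dimVec ≠ 0) ⟨U, hU, hne⟩
  refine hM0 (hθ M ⟨W, hMW⟩ (indecomposable_toRep ?_ ?_))
  · rintro rfl
    exact hM0 (by rw [dimVec_bot, map_zero])
  · rintro A B hAB rfl
    by_contra! h0
    have summand_eq_zero {C D : SubRep X} (hCD : Disjoint C D) (hsup : C ⊔ D = A ⊔ B)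
        (hD : D ≠ ⊥) : θ C.dimVec = 0 := by
      by_contra hC
      have hle := hmin ⟨⟨D ⊔ W, hCD.isCompl_sup_right_of_isCompl_sup_left (hsup ▸ hMW)⟩, hC⟩
        (hsup ▸ le_sup_left)
      exact hD (hCD.symm.eq_bot_of_le (le_sup_right.trans (hsup.le.trans hle)))
    rw [dimVec_sup hAB, map_add, summand_eq_zero hAB rfl h0.2,
      summand_eq_zero hAB.symm (sup_comm B A) h0.1] at hM0
    exact hM0 rfl

lemma finite_range_dimVec (X : QRep Q k) :
    (Set.range (dimVec : SubRep X → Q.V → ℤ)).Finite :=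
  (Set.finite_Icc 0 X.dimVec).subset (Set.range_subset_iff.mpr fun U =>
    ⟨U.dimVec_nonneg, U.dimVec_le⟩)

lemma exists_forall_le_and_forall_lt (X : QRep Q k) (θ : (Q.V → ℤ) →+ ℤ) :
    ∃ Y : SubRep X, (∀ U : SubRep X, θ U.dimVec ≤ θ Y.dimVec) ∧
      ∀ U < Y, θ U.dimVec < θ Y.dimVec := by
  obtain ⟨_, ⟨M, rfl⟩, hM⟩ :=
    Set.exists_max_image _ θ (finite_range_dimVec X) (Set.range_nonempty _)
  obtain ⟨Y, hYM, hY⟩ := exists_minimal_of_wellFoundedLT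
    (fun U : SubRep X => θ U.dimVec = θ M.dimVec) ⟨M, rfl⟩
  simp only [Set.forall_mem_range] at hM
  refine ⟨Y, fun U => (hM U).trans_eq hYM.symm, fun U hU => ?_⟩
  exact hYM ▸ lt_of_le_of_ne (hM U) fun h => hU.not_ge (hY h hU.le)

end SubRep

section Splitting

variable {Q : FinQuiver} {k : Type} [Field k]

/-- The two-term complex `⨁ᵢ Hom(Zᵢ, Yᵢ) → ⨁ₐ Hom(Z_{s(a)}, Y_{t(a)})` whose kernel is
`Hom(Z, Y)` and whose cokernel is `Ext¹(Z, Y)`. -/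
def extDifferential (Z Y : QRep Q k) : (∀ i, Z.carrier i →ₗ[k] Y.carrier i) →ₗ[k]
    (∀ a, Z.carrier (Q.src a) →ₗ[k] Y.carrier (Q.tgt a)) where
  toFun h a := Y.map a ∘ₗ h (Q.src a) - h (Q.tgt a) ∘ₗ Z.map a
  map_add' g h := by
    ext
    simp [add_sub_add_comm]
  map_smul' c h := by
    ext
    simp [smul_sub]

namespace SubRep

variable {X : QRep Q k} (U : SubRep X)

/-- The inclusion of a subrepresentation at the vertex `i`. -/
def incl (i : Q.V) : U.toRep.carrier i →ₗ[k] X.carrier i := (U.mod i).subtype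

/-- The projection onto the quotient by a subrepresentation at the vertex `i`. -/
def proj (i : Q.V) : X.carrier i →ₗ[k] (X.quotBy U).carrier i := (U.mod i).mkQ

lemma proj_comp_map (a : Q.A) :
    U.proj (Q.tgt a) ∘ₗ X.map a = (X.quotBy U).map a ∘ₗ U.proj (Q.src a) :=
  rfl

lemma incl_injective (i : Q.V) : Function.Injective (U.incl i) :=
  (U.mod i).subtype_injective

lemma proj_surjective (i : Q.V) : Function.Surjective (U.proj i) :=
  (U.mod i).mkQ_surjective

lemma exists_comp_proj_eq {V : Type*} [AddCommGroup V] [Module k V] {i : Q.V}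
    {f : X.carrier i →ₗ[k] V} (hf : f ∘ₗ U.incl i = 0) :
    ∃ g : (X.quotBy U).carrier i →ₗ[k] V, g ∘ₗ U.proj i = f :=
  ⟨(U.mod i).liftQ f fun x hx => LinearMap.congr_fun hf ⟨x, hx⟩, (U.mod i).liftQ_mkQ f _⟩

variable {U}

lemma isComplemented_of_retraction (p : ∀ i, X.carrier i →ₗ[k] U.toRep.carrier i)
    (hp : ∀ i, p i ∘ₗ U.incl i = LinearMap.id)
    (hcomm : ∀ a, p (Q.tgt a) ∘ₗ X.map a = U.toRep.map a ∘ₗ p (Q.src a)) :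
    IsComplemented U := by
  refine ⟨⟨fun i => LinearMap.ker (p i), fun a x hx => ?_⟩, isCompl_iff_forall.mpr fun i =>
    LinearMap.isCompl_of_proj (p := U.mod i) (f := p i) (LinearMap.congr_fun (hp i))⟩
  have hx' := LinearMap.congr_fun (hcomm a) x
  rwa [LinearMap.comp_apply, LinearMap.comp_apply, LinearMap.mem_ker.mp hx, map_zero] at hx'

lemma isComplemented_of_surjective_extDifferential
    (h : Function.Surjective (extDifferential (X.quotBy U) U.toRep)) : IsComplemented U := by
  choose p hp using fun i =>
    (U.incl i).exists_leftInverse_of_injective (LinearMap.ker_eq_bot.mpr (U.incl_injective i))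
  -- The failure of a vertexwise retraction to commute with the arrows is a cocycle on `X / U`
  -- representing the class of the extension; a primitive `g` of it corrects the retraction.
  have hobstruction a : (U.toRep.map a ∘ₗ p (Q.src a) - p (Q.tgt a) ∘ₗ X.map a) ∘ₗ
      U.incl (Q.src a) = 0 := by
    rw [LinearMap.sub_comp, LinearMap.comp_assoc, hp, LinearMap.comp_id, sub_eq_zero]
    exact (congrArg (· ∘ₗ U.toRep.map a) (hp (Q.tgt a))).symm
  choose c hc using fun a => U.exists_comp_proj_eq (hobstruction a)
  obtain ⟨g, rfl⟩ := h c
  refine isComplemented_of_retraction (fun i => p i - g i ∘ₗ U.proj i) (fun i => ?_) fun a => ?_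
  · have hzero : U.proj i ∘ₗ U.incl i = 0 :=
      LinearMap.ext fun u => (Submodule.Quotient.mk_eq_zero _).mpr u.2
    rw [LinearMap.sub_comp, hp, LinearMap.comp_assoc, hzero, LinearMap.comp_zero, sub_zero]
  · have hca : U.toRep.map a ∘ₗ g (Q.src a) ∘ₗ U.proj (Q.src a) -
        g (Q.tgt a) ∘ₗ (X.quotBy U).map a ∘ₗ U.proj (Q.src a) =
        U.toRep.map a ∘ₗ p (Q.src a) - p (Q.tgt a) ∘ₗ X.map a := hc a
    rw [LinearMap.sub_comp, LinearMap.comp_sub, LinearMap.comp_assoc, proj_comp_map,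
      sub_eq_sub_iff_sub_eq_sub, ← neg_sub, ← hca, neg_sub]

end SubRep

end Splitting

section Fibers

variable {k : Type*} [Field k] {ι A : Type*} {s t : A → ι} {M N : ι → Type*}
  [∀ i, AddCommGroup (M i)] [∀ i, Module k (M i)] [∀ i, AddCommGroup (N i)] [∀ i, Module k (N i)]

/-- For an arrow `a` known to start at `i`, the map `T a` with its domain read as `M i`. -/
def domAt (T : ∀ a, M (s a) →ₗ[k] N (t a)) :
    ∀ {i : ι} (a : {a // s a = i}), M i →ₗ[k] N (t a)
  | _, ⟨a, rfl⟩ => T a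

/-- For an arrow `a` known to end at `i`, the map `T a` with its codomain read as `N i`. -/
def codAt (T : ∀ a, M (s a) →ₗ[k] N (t a)) :
    ∀ {i : ι} (a : {a // t a = i}), M (s a) →ₗ[k] N i
  | _, ⟨a, rfl⟩ => T a

end Fibers

section Duality

variable {Q : FinQuiver} {k : Type} [Field k]

/-- The dual, under the trace pairing, of the target `⨁ₐ Hom(Z_{s(a)}, Y_{t(a)})` of
`extDifferential Z Y`. -/
abbrev DualCochain (Y Z : QRep Q k) : Type :=
  ∀ a, Y.carrier (Q.tgt a) →ₗ[k] Z.carrier (Q.src a)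

namespace DualCochain

variable {Y Z : QRep Q k}

/-- The first map `Yᵢ → ⨁_{s(a)=i} Y_{t(a)} ⊕ ⨁_{t(a)=i} Z_{s(a)}` of the complex at `i`. -/
def outgoing (ξ : DualCochain Y Z) (i : Q.V) : Y.carrier i →ₗ[k]
    (∀ a : {a // Q.src a = i}, Y.carrier (Q.tgt a)) ×
      (∀ a : {a // Q.tgt a = i}, Z.carrier (Q.src a)) :=
  (LinearMap.pi (domAt Y.map)).prod (LinearMap.pi (domAt ξ))

/-- The second map `⨁_{s(a)=i} Y_{t(a)} ⊕ ⨁_{t(a)=i} Z_{s(a)} → Zᵢ` of the complex at `i`, signed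
so that the composite is the difference of the two sides of the preprojective relation. -/
def incoming (ξ : DualCochain Y Z) (i : Q.V) :
    ((∀ a : {a // Q.src a = i}, Y.carrier (Q.tgt a)) ×
      (∀ a : {a // Q.tgt a = i}, Z.carrier (Q.src a))) →ₗ[k] Z.carrier i :=
  (∑ a, codAt ξ a ∘ₗ LinearMap.proj a).coprod (-∑ a, codAt Z.map a ∘ₗ LinearMap.proj a)

/-- The preprojective relation `∑_{s(a)=i} ξₐ Yₐ = ∑_{t(a)=i} Zₐ ξₐ` at every vertex `i`. -/
def IsPreprojective (ξ : DualCochain Y Z) : Prop := ∀ i, ξ.incoming i ∘ₗ ξ.outgoing i = 0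

lemma incoming_outgoing_apply (ξ : DualCochain Y Z) (i : Q.V) (y : Y.carrier i) :
    ξ.incoming i (ξ.outgoing i y) =
      ∑ a : {a // Q.src a = i}, codAt ξ a (domAt Y.map a y) -
        ∑ a : {a // Q.tgt a = i}, codAt Z.map a (domAt ξ a y) := by
  simp [incoming, outgoing, sub_eq_add_neg, LinearMap.sum_apply]

open Classical in
lemma incoming_inl_single (ξ : DualCochain Y Z) (a : Q.A) (y : Y.carrier (Q.tgt a)) :
    ξ.incoming (Q.src a) (Pi.single ⟨a, rfl⟩ y, 0) = ξ a y := by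
  simp only [incoming, LinearMap.coprod_apply, LinearMap.sum_apply, LinearMap.comp_apply,
    LinearMap.proj_apply, map_zero, add_zero]
  rw [Fintype.sum_eq_single ⟨a, rfl⟩ fun b hb => by rw [Pi.single_eq_of_ne hb, map_zero],
    Pi.single_eq_same]
  rfl

open Classical in
lemma incoming_inr_neg_single (ξ : DualCochain Y Z) (a : Q.A) (z : Z.carrier (Q.src a)) :
    ξ.incoming (Q.tgt a) (0, -Pi.single ⟨a, rfl⟩ z) = Z.map a z := by
  simp only [incoming, LinearMap.coprod_apply, LinearMap.sum_apply, LinearMap.comp_apply,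
    LinearMap.proj_apply, map_zero, zero_add, map_neg, LinearMap.neg_apply, neg_neg]
  rw [Fintype.sum_eq_single ⟨a, rfl⟩ fun b hb => by rw [Pi.single_eq_of_ne hb, map_zero],
    Pi.single_eq_same]
  rfl

lemma sum_trace_comp_extDifferential (ξ : DualCochain Y Z)
    (h : ∀ i, Z.carrier i →ₗ[k] Y.carrier i) :
    ∑ a, LinearMap.trace k _ (ξ a ∘ₗ extDifferential Z Y h a) =
      ∑ i, LinearMap.trace k _ ((ξ.incoming i ∘ₗ ξ.outgoing i) ∘ₗ h i) := by
  have hsrc : ∑ a, LinearMap.trace k _ (ξ a ∘ₗ Y.map a ∘ₗ h (Q.src a)) =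
      ∑ i, ∑ a : {a // Q.src a = i}, LinearMap.trace k _ (codAt ξ a ∘ₗ domAt Y.map a ∘ₗ h i) := by
    rw [← Fintype.sum_fiberwise Q.src]
    refine Fintype.sum_congr _ _ fun i => Fintype.sum_congr _ _ ?_
    rintro ⟨a, rfl⟩
    rfl
  have htgt : ∑ a, LinearMap.trace k _ (ξ a ∘ₗ h (Q.tgt a) ∘ₗ Z.map a) =
      ∑ i, ∑ a : {a // Q.tgt a = i}, LinearMap.trace k _ (codAt Z.map a ∘ₗ domAt ξ a ∘ₗ h i) := by
    rw [← Fintype.sum_fiberwise Q.tgt]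
    refine Fintype.sum_congr _ _ fun i => Fintype.sum_congr _ _ ?_
    rintro ⟨a, rfl⟩
    exact LinearMap.trace_comp_comm' (Z.map a) (ξ a ∘ₗ h (Q.tgt a))
  have hcomp i : (ξ.incoming i ∘ₗ ξ.outgoing i) ∘ₗ h i =
      ∑ a : {a // Q.src a = i}, codAt ξ a ∘ₗ domAt Y.map a ∘ₗ h i -
        ∑ a : {a // Q.tgt a = i}, codAt Z.map a ∘ₗ domAt ξ a ∘ₗ h i := by
    ext z
    simp [incoming_outgoing_apply, LinearMap.sum_apply]
  simp only [hcomp, map_sub, map_sum, Finset.sum_sub_distrib]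
  rw [← hsrc, ← htgt, ← Finset.sum_sub_distrib]
  simp only [extDifferential, LinearMap.coe_mk, AddHom.coe_mk, LinearMap.comp_sub, map_sub]

lemma isPreprojective_of_forall_sum_trace_eq_zero {ξ : DualCochain Y Z}
    (hξ : ∀ h, ∑ a, LinearMap.trace k _ (ξ a ∘ₗ extDifferential Z Y h a) = 0) :
    ξ.IsPreprojective := fun i => eq_zero_of_forall_trace_comp_eq_zero fun φ => by
  have h := hξ (Pi.single i φ)
  rw [sum_trace_comp_extDifferential, Fintype.sum_eq_single i fun j hj => ?_] at h
  · rwa [Pi.single_eq_same] at h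
  · rw [Pi.single_eq_of_ne hj, LinearMap.comp_zero, map_zero]

lemma surjective_extDifferential
    (h : ∀ ξ : DualCochain Y Z, ξ.IsPreprojective → ξ = 0) :
    Function.Surjective (extDifferential Z Y) := by
  refine LinearMap.dualMap_injective_iff.mp ((injective_iff_map_eq_zero _).mpr fun l hl => ?_)
  obtain ⟨ξ, hξ⟩ := exists_forall_eq_sum_trace_comp l
  have hzero : ξ = 0 := h ξ <| isPreprojective_of_forall_sum_trace_eq_zero fun g =>
    (hξ _).symm.trans (LinearMap.congr_fun hl g)
  ext φ
  simp [hξ, hzero]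

section Reduced

/-- A cochain is reduced if no nonzero subrepresentation of `Y` is killed by it and no proper
subrepresentation of `Z` contains its image. -/
structure IsReduced (ξ : DualCochain Y Z) : Prop where
  eq_bot : ∀ K : SubRep Y, (∀ a, K.mod (Q.tgt a) ≤ LinearMap.ker (ξ a)) → K = ⊥
  eq_top : ∀ L : SubRep Z, (∀ a, LinearMap.range (ξ a) ≤ L.mod (Q.src a)) → L = ⊤

lemma IsReduced.outgoing_injective {ξ : DualCochain Y Z} (hξ : ξ.IsReduced) (i : Q.V) :
    Function.Injective (ξ.outgoing i) := by
  let K : SubRep Y := ⟨fun i => LinearMap.ker (ξ.outgoing i), fun a y hy => by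
    have hya : Y.map a y = 0 := congrFun (congrArg Prod.fst hy) ⟨a, rfl⟩
    exact hya ▸ zero_mem _⟩
  have hK : K = ⊥ := hξ.eq_bot K fun a y hy => congrFun (congrArg Prod.snd hy) ⟨a, rfl⟩
  exact LinearMap.ker_eq_bot.mp (congrFun (congrArg SubRep.mod hK) i)

lemma IsReduced.incoming_surjective {ξ : DualCochain Y Z} (hξ : ξ.IsReduced) (i : Q.V) :
    Function.Surjective (ξ.incoming i) := by
  classical
  let L : SubRep Z := ⟨fun i => LinearMap.range (ξ.incoming i), fun a z _ =>
    ⟨(0, -Pi.single ⟨a, rfl⟩ z), (ξ.incoming_inr_neg_single a z)⟩⟩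
  have hL : L = ⊤ := hξ.eq_top L fun a => by
    rintro _ ⟨y, rfl⟩
    exact ⟨(Pi.single ⟨a, rfl⟩ y, 0), ξ.incoming_inl_single a y⟩
  exact LinearMap.range_eq_top.mp (congrFun (congrArg SubRep.mod hL) i)

lemma IsReduced.dimVec_add_le {ξ : DualCochain Y Z} (hξ : ξ.IsReduced) (hpre : ξ.IsPreprojective)
    (i : Q.V) : Y.dimVec i + Z.dimVec i ≤
      ∑ a : {a // Q.src a = i}, Y.dimVec (Q.tgt a) +
        ∑ a : {a // Q.tgt a = i}, Z.dimVec (Q.src a) := by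
  have h := finrank_add_finrank_le_of_comp_eq_zero (hξ.outgoing_injective i)
    (hξ.incoming_surjective i) (hpre i)
  rw [Module.finrank_prod, Module.finrank_pi_fintype, Module.finrank_pi_fintype] at h
  simp only [QRep.dimVec]
  exact_mod_cast h

lemma IsReduced.eulerForm_add_nonpos {ξ : DualCochain Y Z} (hξ : ξ.IsReduced)
    (hpre : ξ.IsPreprojective) {δ : Q.V → ℤ} (hδ : 0 ≤ δ) :
    Q.eulerForm δ Y.dimVec + Q.eulerForm Z.dimVec δ ≤ 0 := by
  have hsum := Finset.sum_le_sum fun i (_ : i ∈ Finset.univ) =>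
    mul_le_mul_of_nonneg_left (hξ.dimVec_add_le hpre i) (hδ i)
  simp only [mul_add, Finset.mul_sum, Finset.sum_add_distrib] at hsum
  have hsrc : ∑ i, ∑ a : {a // Q.src a = i}, δ i * Y.dimVec (Q.tgt a) =
      ∑ a, δ (Q.src a) * Y.dimVec (Q.tgt a) := by
    rw [← Fintype.sum_fiberwise Q.src]
    exact Fintype.sum_congr _ _ fun i => Fintype.sum_congr _ _ fun a => by rw [a.2]
  have htgt : ∑ i, ∑ a : {a // Q.tgt a = i}, δ i * Z.dimVec (Q.src a) =
      ∑ a, Z.dimVec (Q.src a) * δ (Q.tgt a) := by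
    rw [← Fintype.sum_fiberwise Q.tgt]
    exact Fintype.sum_congr _ _ fun i => Fintype.sum_congr _ _ fun a => by rw [a.2, mul_comm]
  have hdiag : ∑ i, Z.dimVec i * δ i = ∑ i, δ i * Z.dimVec i :=
    Fintype.sum_congr _ _ fun i => mul_comm _ _
  rw [FinQuiver.eulerForm, FinQuiver.eulerForm, hdiag]
  linarith

end Reduced

section Reduction

variable (ξ : DualCochain Y Z)

/-- The largest subrepresentation of `Y` killed by `ξ`. -/
def kernelCore : SubRep Y := sSup {K | ∀ a, K.mod (Q.tgt a) ≤ LinearMap.ker (ξ a)}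

/-- The smallest subrepresentation of `Z` containing the image of `ξ`. -/
def imageSpan : SubRep Z := sInf {L | ∀ a, LinearMap.range (ξ a) ≤ L.mod (Q.src a)}

lemma kernelCore_mod_le (a : Q.A) : ξ.kernelCore.mod (Q.tgt a) ≤ LinearMap.ker (ξ a) := by
  rw [kernelCore, SubRep.mod_sSup]
  exact iSup₂_le fun K hK => hK a

lemma range_le_imageSpan_mod (a : Q.A) : LinearMap.range (ξ a) ≤ ξ.imageSpan.mod (Q.src a) := by
  rw [imageSpan, SubRep.mod_sInf]
  exact le_iInf₂ fun L hL => hL a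

/-- The cochain induced by `ξ` between the quotient by its kernel core and its image span. -/
def reduce : DualCochain (Y.quotBy ξ.kernelCore) ξ.imageSpan.toRep := fun a =>
  (ξ.kernelCore.mod (Q.tgt a)).liftQ
    ((ξ a).codRestrict (ξ.imageSpan.mod (Q.src a)) fun y =>
      ξ.range_le_imageSpan_mod a ⟨y, rfl⟩)
    fun _ hy => Subtype.ext (ξ.kernelCore_mod_le a hy)

lemma incl_reduce_proj (a : Q.A) (y : Y.carrier (Q.tgt a)) :
    ξ.imageSpan.incl _ (ξ.reduce a (ξ.kernelCore.proj _ y)) = ξ a y :=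
  rfl

lemma isReduced_reduce : ξ.reduce.IsReduced where
  eq_bot N hN := ξ.kernelCore.eq_bot_of_comapMkQ_le <| le_sSup fun a y hy =>
    (ξ.incl_reduce_proj a y).symm.trans (congrArg (ξ.imageSpan.incl _) (hN a hy))
  eq_top N hN := by
    by_contra hne
    refine (ξ.imageSpan.mapSubtype_lt (lt_top_iff_ne_top.mpr hne)).not_ge (sInf_le fun a => ?_)
    rintro _ ⟨y, rfl⟩
    exact ⟨_, hN a ⟨_, rfl⟩, ξ.incl_reduce_proj a y⟩

lemma incl_incoming_outgoing_reduce_proj (i : Q.V) (y : Y.carrier i) :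
    ξ.imageSpan.incl i (ξ.reduce.incoming i (ξ.reduce.outgoing i (ξ.kernelCore.proj i y))) =
      ξ.incoming i (ξ.outgoing i y) := by
  simp only [incoming_outgoing_apply, map_sub, map_sum]
  congr 1 <;>
  · refine Fintype.sum_congr _ _ ?_
    rintro ⟨a, rfl⟩
    rfl

variable {ξ}

lemma IsPreprojective.reduce (hξ : ξ.IsPreprojective) : ξ.reduce.IsPreprojective := fun i => by
  refine LinearMap.ext fun y => ξ.imageSpan.incl_injective i ?_
  obtain ⟨y, rfl⟩ := ξ.kernelCore.proj_surjective i y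
  rw [LinearMap.comp_apply, incl_incoming_outgoing_reduce_proj, LinearMap.zero_apply, map_zero]
  exact LinearMap.congr_fun (hξ i) y

lemma IsPreprojective.eulerForm_le (hξ : ξ.IsPreprojective) {δ : Q.V → ℤ} (hδ : 0 ≤ δ)
    (hdom : ∀ x, 0 ≤ x → 0 ≤ Q.eulerForm δ x + Q.eulerForm x δ) :
    Q.eulerForm δ Y.dimVec ≤
      Q.eulerForm δ ξ.kernelCore.dimVec + Q.eulerForm δ ξ.imageSpan.dimVec := by
  have hquot := map_sub (Q.eulerHom δ) Y.dimVec ξ.kernelCore.dimVec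
  simp only [← SubRep.dimVec_quotBy, FinQuiver.eulerHom_apply] at hquot
  have hreduced : Q.eulerForm δ (Y.quotBy ξ.kernelCore).dimVec +
      Q.eulerForm ξ.imageSpan.dimVec δ ≤ 0 :=
    ξ.isReduced_reduce.eulerForm_add_nonpos hξ.reduce hδ
  have hspan := hdom ξ.imageSpan.dimVec ξ.imageSpan.dimVec_nonneg
  linarith

lemma eq_zero_of_kernelCore_eq_top (h : ξ.kernelCore = ⊤) : ξ = 0 :=
  funext fun a => LinearMap.ext fun y =>
    ξ.kernelCore_mod_le a (h ▸ Submodule.mem_top : y ∈ ξ.kernelCore.mod _)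

end Reduction

end DualCochain

variable {δ : Q.V → ℤ}

lemma surjective_extDifferential_of_forall_lt {Y Z : QRep Q k} (hδ : 0 ≤ δ)
    (hdom : ∀ x, 0 ≤ x → 0 ≤ Q.eulerForm δ x + Q.eulerForm x δ)
    (hY : ∀ K : SubRep Y, K < ⊤ → Q.eulerForm δ K.dimVec < Q.eulerForm δ Y.dimVec)
    (hZ : ∀ L : SubRep Z, Q.eulerForm δ L.dimVec ≤ 0) :
    Function.Surjective (extDifferential Z Y) :=
  DualCochain.surjective_extDifferential fun ξ hξ =>
    DualCochain.eq_zero_of_kernelCore_eq_top <| not_lt_top_iff.mp fun hK => by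
      linarith [hξ.eulerForm_le hδ hdom, hY _ hK, hZ ξ.imageSpan]

lemma SubRep.exists_isComplemented_forall_le (X : QRep Q k) (hδ : 0 ≤ δ)
    (hdom : ∀ x, 0 ≤ x → 0 ≤ Q.eulerForm δ x + Q.eulerForm x δ) :
    ∃ Y : SubRep X, IsComplemented Y ∧
      ∀ U : SubRep X, Q.eulerForm δ U.dimVec ≤ Q.eulerForm δ Y.dimVec := by
  obtain ⟨Y, hmax, hmin⟩ := exists_forall_le_and_forall_lt X (Q.eulerHom δ)
  refine ⟨Y, isComplemented_of_surjective_extDifferential <|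
    surjective_extDifferential_of_forall_lt hδ hdom (fun K hK => ?_) fun L => ?_, hmax⟩
  · exact Y.dimVec_mapSubtype K ▸ hmin _ (Y.mapSubtype_lt hK)
  · have hL := hmax (Y.comapMkQ L)
    rwa [dimVec_comapMkQ, map_add, add_le_iff_nonpos_left] at hL

end Duality

theorem regular_iff_defect_conditions_general (Q : FinQuiver) (k : Type) [Field k] (X : QRep Q k)
    (δ : Q.V → ℤ) (hδ : 0 ≤ δ) (hdom : ∀ x, 0 ≤ x → 0 ≤ Q.eulerForm δ x + Q.eulerForm x δ) :
    (∀ U W : SubRep X, (∀ i, IsCompl (U.mod i) (W.mod i)) →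
        U.toRep.Indecomposable → Q.eulerForm δ U.dimVec = 0) ↔
      (Q.eulerForm δ X.dimVec = 0 ∧ ∀ Y : SubRep X, Q.eulerForm δ Y.dimVec ≤ 0) := by
  constructor
  · intro hregular
    have hsummand {U : SubRep X} (hU : IsComplemented U) : Q.eulerForm δ U.dimVec = 0 :=
      SubRep.map_dimVec_eq_zero_of_isComplemented (Q.eulerHom δ)
        (fun U ⟨W, hUW⟩ => hregular U W (SubRep.isCompl_iff_forall.mp hUW)) hU
    obtain ⟨Y, hY, hmax⟩ := SubRep.exists_isComplemented_forall_le X hδ hdom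
    exact ⟨SubRep.dimVec_top (X := X) ▸ hsummand isComplemented_top,
      fun U => (hmax U).trans_eq (hsummand hY)⟩
  · rintro ⟨hX, hle⟩ U W hUW -
    have hadd := map_add (Q.eulerHom δ) U.dimVec W.dimVec
    rw [SubRep.dimVec_add_of_isCompl (SubRep.isCompl_iff_forall.mpr hUW)] at hadd
    simp only [FinQuiver.eulerHom_apply] at hadd
    linarith [hle U, hle W]

/-- **Proposition 1.** For a representation `X` of an affine quiver, the following are
equivalent: (i) every indecomposable direct summand `Z` of `X` (i.e. every complemented
subrepresentation that is indecomposable) satisfies `∂(dim Z) = 0`; (ii) `∂(dim X) = 0`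
and `∂(dim Y) ≤ 0` for every subrepresentation `Y ⊆ X`. -/
theorem regular_iff_defect_conditions
    (Q : AffineQuiver) (k : Type) [Field k] (X : QRep Q.toFinQuiver k) :
    (∀ U W : SubRep X, (∀ i, IsCompl (U.mod i) (W.mod i)) →
        U.toRep.Indecomposable → Q.defect U.dimVec = 0) ↔
      (Q.defect X.dimVec = 0 ∧ ∀ Y : SubRep X, Q.defect Y.dimVec ≤ 0) :=
  regular_iff_defect_conditions_general Q.toFinQuiver k X Q.δ (fun i => (Q.delta_pos i).le)
    fun x _ => ((Q.radical_iff Q.δ).mpr ⟨1, (one_smul ℤ Q.δ).symm⟩ x).ge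
end

section
/- Let Q be an affine quiver and k a field. Say a representation X of Q over k satisfies condition (R) if ∂(dim X) = 0 and ∂(dim Y) ≤ 0 for every subrepresentation Y ⊆ X. If X ⊆ Z is a subrepresentation such that X satisfies (R) and the quotient representation Z/X satisfies (R), then Z satisfies (R). (The class of regular representations is closed under extensions.) -/
open scoped BigOperators

/-- Condition (R): `∂(dim X) = 0` and `∂(dim Y) ≤ 0` for every subrepresentation `Y ⊆ X`
(i.e. `X` is a regular representation). -/
def RegCond (Q : AffineQuiver) {k : Type} [Field k] (X : QRep Q.toFinQuiver k) : Prop :=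
  Q.defect X.dimVec = 0 ∧ ∀ Y : SubRep X, Q.defect Y.dimVec ≤ 0

/-!
A subrepresentation `Y ⊆ Z` is an extension of its image in `Z / U` by `U ∩ Y`, so its dimension
vector is the sum of theirs. Any additive function of the dimension vector, such as the defect, is
therefore nonpositive on `Y` as soon as it is nonpositive on the subrepresentations of `U` and of
`Z / U`. Regularity is thus an instance of King's semistability, for the weight `∂`.
-/

theorem finrank_map_add_finrank_inf_ker {K V W : Type*} [DivisionRing K] [AddCommGroup V]
    [Module K V] [AddCommGroup W] [Module K W] (f : V →ₗ[K] W) (p : Submodule K V)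
    [FiniteDimensional K p] :
    Module.finrank K (p.map f) + Module.finrank K ↥(p ⊓ LinearMap.ker f) = Module.finrank K p := by
  rw [← (f.domRestrict p).finrank_range_add_finrank_ker, LinearMap.range_domRestrict,
    LinearMap.ker_domRestrict, ← Submodule.map_comap_subtype, Submodule.finrank_map_subtype_eq]

theorem finrank_comap_subtype_add_finrank_map_mkQ {K V : Type*} [DivisionRing K] [AddCommGroup V]
    [Module K V] (u p : Submodule K V) [FiniteDimensional K p] :
    Module.finrank K (p.comap u.subtype) + Module.finrank K (p.map u.mkQ) =
      Module.finrank K p := by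
  rw [← finrank_map_add_finrank_inf_ker u.mkQ p, Submodule.ker_mkQ, inf_comm,
    ← Submodule.map_comap_subtype, Submodule.finrank_map_subtype_eq, add_comm]

namespace FinQuiver

variable (Q : FinQuiver)

theorem eulerForm_add_right (x y z : Q.V → ℤ) :
    Q.eulerForm x (y + z) = Q.eulerForm x y + Q.eulerForm x z := by
  simp only [eulerForm, Pi.add_apply, mul_add, Finset.sum_add_distrib]
  ring

/-- The Euler form with its first argument fixed, as a homomorphism in the second: the weight that
turns semistability into a condition on Euler pairings. For `x = δ` it is the defect. -/
def eulerFormHom (x : Q.V → ℤ) : (Q.V → ℤ) →+ ℤ :=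
  AddMonoidHom.mk' (Q.eulerForm x) (Q.eulerForm_add_right x)

end FinQuiver

section Extensions

variable {Q : FinQuiver} {k : Type} [Field k] {Z : QRep Q k}

namespace SubRep

/-- The intersection `U ∩ Y` of two subrepresentations, encoded as a subrepresentation of `U`. -/
def comapSubtype (U Y : SubRep Z) : SubRep U.toRep where
  mod i := (Y.mod i).comap (U.mod i).subtype
  stable a x hx := Y.stable a x.1 hx

/-- The image of a subrepresentation `Y` in the quotient representation `Z / U`. -/
def mapMkQ (U Y : SubRep Z) : SubRep (Z.quotBy U) where
  mod i := (Y.mod i).map (U.mod i).mkQ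
  stable := by
    rintro a _ ⟨y, hy, rfl⟩
    exact ⟨Z.map a y, Y.stable a y hy, rfl⟩

theorem dimVec_comapSubtype_add_dimVec_mapMkQ (U Y : SubRep Z) :
    (U.comapSubtype Y).dimVec + (U.mapMkQ Y).dimVec = Y.dimVec :=
  funext fun i ↦ (Nat.cast_add _ _).symm.trans <|
    congrArg Nat.cast (finrank_comap_subtype_add_finrank_map_mkQ (U.mod i) (Y.mod i))

end SubRep

namespace QRep

theorem dimVec_toRep_add_dimVec_quotBy (Z : QRep Q k) (U : SubRep Z) :
    U.toRep.dimVec + (Z.quotBy U).dimVec = Z.dimVec := by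
  rw [add_comm]
  exact funext fun i ↦ (Nat.cast_add _ _).symm.trans <|
    congrArg Nat.cast (U.mod i).finrank_quotient_add_finrank

/-- King's `θ`-semistability, for a weight `θ` on dimension vectors with values in an ordered
monoid. The sign convention is that subrepresentations have nonpositive weight, and the zero
representation counts as semistable. -/
def IsSemistable {Γ : Type*} [AddCommMonoid Γ] [Preorder Γ] (θ : (Q.V → ℤ) →+ Γ)
    (X : QRep Q k) : Prop :=
  θ X.dimVec = 0 ∧ ∀ Y : SubRep X, θ Y.dimVec ≤ 0

end QRep

theorem regular_closed_under_extensions_general {Γ : Type*} [AddCommMonoid Γ] [Preorder Γ]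
    [IsOrderedAddMonoid Γ] {θ : (Q.V → ℤ) →+ Γ} {U : SubRep Z}
    (hSub : U.toRep.IsSemistable θ) (hQuot : (Z.quotBy U).IsSemistable θ) :
    Z.IsSemistable θ := by
  refine ⟨?_, fun Y ↦ ?_⟩
  · rw [← Z.dimVec_toRep_add_dimVec_quotBy U, map_add, hSub.1, hQuot.1, add_zero]
  · rw [← U.dimVec_comapSubtype_add_dimVec_mapMkQ Y, map_add]
    exact add_nonpos (hSub.2 (U.comapSubtype Y)) (hQuot.2 (U.mapMkQ Y))

end Extensions

theorem regCond_iff_isSemistable {Q : AffineQuiver} {k : Type} [Field k]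
    {X : QRep Q.toFinQuiver k} : RegCond Q X ↔ X.IsSemistable (Q.eulerFormHom Q.δ) :=
  Iff.rfl

/-- The class of regular representations of an affine quiver is closed under extensions:
if a subrepresentation `U ⊆ Z` satisfies (R) and the quotient `Z/U` satisfies (R), then
`Z` satisfies (R). -/
theorem regular_closed_under_extensions
    (Q : AffineQuiver) (k : Type) [Field k] (Z : QRep Q.toFinQuiver k) (U : SubRep Z)
    (hSub : RegCond Q U.toRep) (hQuot : RegCond Q (Z.quotBy U)) :
    RegCond Q Z :=
  regCond_iff_isSemistable.2 <| regular_closed_under_extensions_general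
    (regCond_iff_isSemistable.1 hSub) (regCond_iff_isSemistable.1 hQuot)
end

section
/- Let Q be an affine quiver with n + 1 vertices and let δ be the minimal positive imaginary root. For every finite field F_q, the number of isomorphism classes of indecomposable representations of Q over F_q with dimension vector δ is exactly q + n; moreover every indecomposable representation of dimension vector δ over F_q is absolutely indecomposable. In particular a_δ(q) = q + dim g_δ, confirming Kac's conjecture in dimension δ. -/
open scoped BigOperators

section MatrixRep

variable (Q : FinQuiver) (k : Type) [Field k]

/-- The space of representations of `Q` on the fixed vector spaces `k^{d i}`,
in matrix form. -/
def MRep (d : Q.V → ℕ) : Type :=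
  ∀ a : Q.A, Matrix (Fin (d (Q.tgt a))) (Fin (d (Q.src a))) k

variable {Q k}

/-- A family of subspaces is a subrepresentation of `x` if it is stable under all the
arrow maps of `x`. -/
def MSub {d : Q.V → ℕ} (x : MRep Q k d) (U : ∀ i, Submodule k (Fin (d i) → k)) : Prop :=
  ∀ a : Q.A, ∀ v ∈ U (Q.src a), (x a).mulVec v ∈ U (Q.tgt a)

/-- A representation is indecomposable if it is nonzero and is not the internal direct
sum of two nonzero subrepresentations. -/
def MIndec {d : Q.V → ℕ} (x : MRep Q k d) : Prop :=
  (∃ i, 0 < d i) ∧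
    ∀ U W : ∀ i, Submodule k (Fin (d i) → k), MSub x U → MSub x W →
      (∀ i, IsCompl (U i) (W i)) →
        (∀ i, U i = ⊥) ∨ (∀ i, W i = ⊥)

/-- Isomorphism of representations: simultaneous conjugation by a family of invertible
matrices. -/
def MIso {d : Q.V → ℕ} (x y : MRep Q k d) : Prop :=
  ∃ g : ∀ i, GL (Fin (d i)) k,
    ∀ a : Q.A, y a = ((g (Q.tgt a) : Matrix (Fin (d (Q.tgt a))) (Fin (d (Q.tgt a))) k) * x a) *
      (((g (Q.src a))⁻¹ : GL (Fin (d (Q.src a))) k) : Matrix (Fin (d (Q.src a))) (Fin (d (Q.src a))) k)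

/-- Extension of scalars along a field extension: apply the field embedding to all
matrix entries. -/
def mapRep {d : Q.V → ℕ} (K : Type) [Field K] [Algebra k K] (x : MRep Q k d) :
    MRep Q K d :=
  fun a => (x a).map (algebraMap k K)

/-- A representation over `k` is absolutely indecomposable if it remains indecomposable
after extension of scalars to an algebraic closure of `k`. -/
def MAbsIndec {d : Q.V → ℕ} (x : MRep Q k d) : Prop :=
  MIndec x ∧ MIndec (mapRep (AlgebraicClosure k) x)

end MatrixRep

/-!
Let `x` be an indecomposable representation of dimension at most `δ`. By Ringel's lemma `End x` is
a division algebra unless `x` has a proper indecomposable subrepresentation with self-extensions,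
which induction on the dimension excludes. So `dim End x` divides every coordinate of the dimension
vector, and `q(dim x) = dim End x - dim Ext¹(x, x)` forces `End x = k`. Over any field the
indecomposables of dimension `δ` are therefore bricks, and bricks stay bricks after extension of
scalars.

Over `F_q` the stabilizer of a brick in `G = ∏ᵢ GL_{δᵢ}` is `F_qˣ`, so the number of isomorphism
classes is `(q - 1)/|G|` times the number of indecomposable points of the representation space.
The whole space contributes `(q - 1) / ∏ᵢ ∏_{1 ≤ j ≤ δᵢ} (1 - q⁻ʲ) = q + n + O(q⁻¹)`, since
`q(δ) = 0`. The decomposable points contribute only `O(q⁻¹)`, since the Tits form is at least `1`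
strictly between `0` and `δ`. The count is an integer, so it equals `q + n` for all large `q`.

For small `q`, pass to the extension of `F_q` of large prime degree `r`. The Galois group, of
order `r`, acts on the indecomposables over the extension with those over `F_q` as fixed points,
which determines the count over `F_q` modulo `r`.
-/

section Arithmetic

namespace FinQuiver

variable (Q : FinQuiver)

/-- `δ` is a positive vector generating the radical of a positive semidefinite Tits form: the
minimal positive imaginary root. Unlike in `AffineQuiver`, loops and oriented cycles are allowed. -/
structure IsMinimalImaginaryRoot (δ : Q.V → ℕ) : Prop where
  pos : ∀ i, 0 < δ i
  titsForm_nonneg : ∀ x, 0 ≤ Q.titsForm x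
  mem_radical_iff : ∀ x : Q.V → ℤ,
    (∀ y, Q.eulerForm x y + Q.eulerForm y x = 0) ↔ ∃ m : ℤ, x = m • fun i => (δ i : ℤ)

/-- The Euler form as a bilinear form. -/
def eulerBilin : LinearMap.BilinForm ℤ (Q.V → ℤ) :=
  LinearMap.mk₂ ℤ Q.eulerForm
    (fun x x' y => by
      simp only [eulerForm, Pi.add_apply, add_mul, Finset.sum_add_distrib]; ring)
    (fun c x y => by
      simp only [eulerForm, Pi.smul_apply, smul_eq_mul, mul_assoc, mul_sub, Finset.mul_sum])
    (fun x y y' => by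
      simp only [eulerForm, Pi.add_apply, mul_add, Finset.sum_add_distrib]; ring)
    (fun c x y => by
      simp only [eulerForm, Pi.smul_apply, smul_eq_mul, mul_left_comm, mul_sub, Finset.mul_sum])

theorem titsForm_smul (m : ℤ) (x : Q.V → ℤ) : Q.titsForm (m • x) = m ^ 2 * Q.titsForm x := by
  change Q.eulerBilin (m • x) (m • x) = m ^ 2 * Q.eulerBilin x x
  simp only [map_smul, LinearMap.smul_apply, smul_eq_mul]
  ring

variable {Q}

/-- Cauchy–Schwarz for the symmetrized Euler form. -/
theorem eulerForm_add_eulerForm_eq_zero (hQ : ∀ x, 0 ≤ Q.titsForm x) {x : Q.V → ℤ}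
    (hx : Q.titsForm x = 0) (y : Q.V → ℤ) : Q.eulerForm x y + Q.eulerForm y x = 0 := by
  let B : LinearMap.BilinForm ℤ (Q.V → ℤ) := Q.eulerBilin + Q.eulerBilin.flip
  have hB : ∀ z, B z z = 2 * Q.titsForm z := fun z => (two_mul _).symm
  have hsymm : LinearMap.IsSymm B := ⟨fun _ _ => add_comm _ _⟩
  have hxy := LinearMap.BilinForm.apply_sq_le_of_symm B
    (fun z => by rw [hB]; exact mul_nonneg zero_le_two (hQ z)) hsymm x y
  rw [hB x, hx, mul_zero, zero_mul] at hxy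
  exact pow_eq_zero_iff two_ne_zero |>.1 (le_antisymm hxy (sq_nonneg _))

namespace IsMinimalImaginaryRoot

variable {δ : Q.V → ℕ}

theorem titsForm_eq_zero_iff (hδ : Q.IsMinimalImaginaryRoot δ) {x : Q.V → ℤ} :
    Q.titsForm x = 0 ↔ ∃ m : ℤ, x = m • fun i => (δ i : ℤ) := by
  rw [← hδ.mem_radical_iff]
  refine ⟨eulerForm_add_eulerForm_eq_zero hδ.titsForm_nonneg, fun h => ?_⟩
  have := h x
  unfold titsForm
  lia

theorem titsForm_self (hδ : Q.IsMinimalImaginaryRoot δ) : Q.titsForm (fun i => (δ i : ℤ)) = 0 :=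
  hδ.titsForm_eq_zero_iff.2 ⟨1, (one_smul _ _).symm⟩

theorem one_le_titsForm (hδ : Q.IsMinimalImaginaryRoot δ) {β : Q.V → ℕ} (hβ : β ≤ δ) (h0 : β ≠ 0)
    (h1 : β ≠ δ) : 1 ≤ Q.titsForm (fun i => (β i : ℤ)) := by
  refine Int.lt_iff_add_one_le.1 ((hδ.titsForm_nonneg _).lt_of_ne' fun h => ?_)
  obtain ⟨m, hm⟩ := hδ.titsForm_eq_zero_iff.1 h
  have hβm : ∀ i, (β i : ℤ) = m * δ i := fun i => congr_fun hm i
  obtain ⟨i, hi⟩ := Function.ne_iff.1 h0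
  have hi0 : 0 < (β i : ℤ) := by simpa [Nat.pos_iff_ne_zero] using hi
  have hδi : 0 < (δ i : ℤ) := by exact_mod_cast hδ.pos i
  have hm0 : 0 < m := pos_of_mul_pos_left (hβm i ▸ hi0) hδi.le
  have hm1 : m ≤ 1 := by
    have : m * δ i ≤ 1 * δ i := by rw [← hβm, one_mul]; exact_mod_cast hβ i
    exact le_of_mul_le_mul_right this hδi
  obtain rfl : m = 1 := by lia
  exact h1 (funext fun j => by exact_mod_cast (hβm j).trans (one_mul _))

theorem sq_le_titsForm_of_forall_dvd (hδ : Q.IsMinimalImaginaryRoot δ) {β : Q.V → ℕ}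
    (hβ : β ≤ δ) (h0 : β ≠ 0) (h1 : β ≠ δ) {s : ℕ} (hs : ∀ i, s ∣ β i) :
    (s : ℤ) ^ 2 ≤ Q.titsForm (fun i => (β i : ℤ)) := by
  choose y hy using hs
  have hβy : (fun i => (β i : ℤ)) = (s : ℤ) • fun i => (y i : ℤ) := by
    funext j; simp [hy j]
  have hpos := hδ.one_le_titsForm hβ h0 h1
  rw [hβy, titsForm_smul] at hpos ⊢
  have hy0 : 0 < Q.titsForm (fun i => (y i : ℤ)) := pos_of_mul_pos_right hpos (sq_nonneg _)
  exact le_mul_of_one_le_right (sq_nonneg _) hy0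

theorem eq_one_of_forall_dvd [Nonempty Q.V] (hδ : Q.IsMinimalImaginaryRoot δ) {s : ℕ}
    (h : ∀ i, s ∣ δ i) : s = 1 := by
  choose y hy using h
  obtain ⟨i⟩ := ‹Nonempty Q.V›
  have hs : s ≠ 0 := by rintro rfl; simpa [hy i] using hδ.pos i
  have hδy : (fun i => (δ i : ℤ)) = (s : ℤ) • fun i => (y i : ℤ) := by
    funext j; simp [hy j]
  have hy0 : Q.titsForm (fun i => (y i : ℤ)) = 0 := by
    have := hδ.titsForm_self
    rw [hδy, titsForm_smul] at this
    exact (mul_eq_zero.1 this).resolve_left (by positivity)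
  obtain ⟨m, hm⟩ := hδ.titsForm_eq_zero_iff.1 hy0
  have hsm : (s : ℤ) * m * δ i = 1 * δ i := by
    rw [one_mul, mul_assoc]
    exact ((congr_fun hδy i).trans (congrArg ((s : ℤ) * ·) (congr_fun hm i))).symm
  have hδi : (δ i : ℤ) ≠ 0 := by exact_mod_cast (hδ.pos i).ne'
  have := Int.eq_one_of_mul_eq_one_right (Int.natCast_nonneg s) (mul_right_cancel₀ hδi hsm)
  exact_mod_cast this

end IsMinimalImaginaryRoot

end FinQuiver

theorem AffineQuiver.isMinimalImaginaryRoot (Q : AffineQuiver) :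
    Q.toFinQuiver.IsMinimalImaginaryRoot (fun i => (Q.δ i).toNat) where
  pos i := Int.pos_iff_toNat_pos.1 (Q.delta_pos i)
  titsForm_nonneg := Q.posSemidef
  mem_radical_iff x := by
    simp only [Int.toNat_of_nonneg (Q.delta_pos _).le]
    exact Q.radical_iff x

end Arithmetic

section LinearRepresentations

open Module

universe u

instance piIsModularLattice {ι : Type*} {α : ι → Type*} [∀ i, Lattice (α i)]
    [∀ i, IsModularLattice (α i)] : IsModularLattice (∀ i, α i) :=
  ⟨fun y _ hxz i => sup_inf_le_assoc_of_le (y i) (hxz i)⟩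

theorem sup_inf_sup_eq_of_disjoint {α : Type*} [Lattice α] [OrderBot α] [IsModularLattice α]
    {a b c : α} (hab : Disjoint a b) (habc : Disjoint (a ⊔ b) c) : (a ⊔ c) ⊓ (b ⊔ c) = c := by
  have ha : Disjoint a (b ⊔ c) := hab.disjoint_sup_right_of_disjoint_sup_left habc
  rw [sup_comm a c, sup_inf_assoc_of_le a le_sup_right, ha.eq_bot, sup_bot_eq]

theorem linearMap_exists_comp_eq_of_ker_le {F A B C : Type*} [Field F]
    [AddCommGroup A] [AddCommGroup B] [AddCommGroup C] [Module F A] [Module F B] [Module F C]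
    {p : A →ₗ[F] B} {g : A →ₗ[F] C} (h : LinearMap.ker p ≤ LinearMap.ker g) :
    ∃ c : B →ₗ[F] C, c ∘ₗ p = g := by
  obtain ⟨c, hc⟩ := LinearMap.exists_extend
    ((LinearMap.ker p).liftQ g h ∘ₗ p.quotKerEquivRange.symm.toLinearMap)
  refine ⟨c, LinearMap.ext fun v => ?_⟩
  have := LinearMap.congr_fun hc (p.quotKerEquivRange ((LinearMap.ker p).mkQ v))
  simpa using this

theorem mem_of_mem_sup_of_retraction {F A : Type*} [Field F] [AddCommGroup A] [Module F A]
    {U W : Submodule F A} {ρ : A →ₗ[F] U} (hρU : ∀ u : U, ρ u = u) (hρW : W ≤ LinearMap.ker ρ)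
    {v : A} (hv : v ∈ U ⊔ W) (hρv : ρ v = 0) : v ∈ W := by
  obtain ⟨u, hu, w, hw, rfl⟩ := Submodule.mem_sup.1 hv
  have hu0 : (⟨u, hu⟩ : U) = 0 := by
    rw [← hρU ⟨u, hu⟩, ← hρv, map_add, LinearMap.mem_ker.1 (hρW hw), add_zero]
  have hu0 : u = 0 := congrArg Subtype.val hu0
  rwa [hu0, zero_add]

/-- Representations of `Q` over `F` on the family of vector spaces `X`. -/
abbrev LinRep (Q : FinQuiver) (F : Type*) [Field F] (X : Q.V → Type*) [∀ i, AddCommGroup (X i)]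
    [∀ i, Module F (X i)] : Type _ :=
  ∀ a, X (Q.src a) →ₗ[F] X (Q.tgt a)

namespace LinRep

variable {Q : FinQuiver} {F : Type*} [Field F]
variable {X : Q.V → Type u} [∀ i, AddCommGroup (X i)] [∀ i, Module F (X i)]
variable {Y : Q.V → Type*} [∀ i, AddCommGroup (Y i)] [∀ i, Module F (Y i)]
variable {Z : Q.V → Type*} [∀ i, AddCommGroup (Z i)] [∀ i, Module F (Z i)]

/-- Homomorphisms of representations. -/
def IsHom (f : LinRep Q F X) (g : LinRep Q F Y) (φ : ∀ i, X i →ₗ[F] Y i) : Prop :=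
  ∀ a, φ (Q.tgt a) ∘ₗ f a = g a ∘ₗ φ (Q.src a)

theorem IsHom.comp {f : LinRep Q F X} {g : LinRep Q F Y} {h : LinRep Q F Z}
    {ψ : ∀ i, Y i →ₗ[F] Z i} {φ : ∀ i, X i →ₗ[F] Y i} (hψ : IsHom g h ψ) (hφ : IsHom f g φ) :
    IsHom f h (fun i => ψ i ∘ₗ φ i) := fun a => by
  rw [LinearMap.comp_assoc, hφ a, ← LinearMap.comp_assoc, hψ a, LinearMap.comp_assoc]

/-- The two-term complex `⨁ᵢ Hom(Xᵢ, Yᵢ) → ⨁ₐ Hom(X_{s(a)}, Y_{t(a)})` with kernel `Hom(f, g)`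
and cokernel `Ext¹(f, g)`. -/
def homDiff (f : LinRep Q F X) (g : LinRep Q F Y) :
    (∀ i, X i →ₗ[F] Y i) →ₗ[F] ∀ a, X (Q.src a) →ₗ[F] Y (Q.tgt a) where
  toFun φ a := φ (Q.tgt a) ∘ₗ f a - g a ∘ₗ φ (Q.src a)
  map_add' φ ψ := by
    funext a
    simp only [Pi.add_apply, LinearMap.add_comp, LinearMap.comp_add]
    abel
  map_smul' c φ := by
    funext a
    simp only [Pi.smul_apply, LinearMap.smul_comp, LinearMap.comp_smul, smul_sub,
      RingHom.id_apply]

theorem homDiff_eq_zero_iff {f : LinRep Q F X} {g : LinRep Q F Y} {φ : ∀ i, X i →ₗ[F] Y i} :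
    homDiff f g φ = 0 ↔ IsHom f g φ := by
  simp only [funext_iff, IsHom, homDiff, LinearMap.coe_mk, AddHom.coe_mk, Pi.zero_apply,
    sub_eq_zero]

theorem homDiff_comp_right {f : LinRep Q F X} {g : LinRep Q F Y} {h : LinRep Q F Z}
    {φ : ∀ i, X i →ₗ[F] Y i} (hφ : IsHom f g φ) (ψ : ∀ i, Y i →ₗ[F] Z i) :
    homDiff f h (fun i => ψ i ∘ₗ φ i) = fun a => homDiff g h ψ a ∘ₗ φ (Q.src a) := by
  funext a
  change (ψ _ ∘ₗ φ _) ∘ₗ f a - h a ∘ₗ ψ _ ∘ₗ φ _ = (ψ _ ∘ₗ g a - h a ∘ₗ ψ _) ∘ₗ φ _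
  rw [LinearMap.comp_assoc, hφ a, LinearMap.sub_comp, LinearMap.comp_assoc, LinearMap.comp_assoc]

/-- If `Ext¹(g, g) = 0`, a family of linear maps that is a homomorphism on the kernel of a
homomorphism `ψ` can be corrected by a multiple of `ψ` to a homomorphism. -/
theorem exists_isHom_sub_comp {f : LinRep Q F X} {g : LinRep Q F Y}
    (hg : Function.Surjective (homDiff g g)) {ψ : ∀ i, X i →ₗ[F] Y i} (hψ : IsHom f g ψ)
    (ρ : ∀ i, X i →ₗ[F] Y i)
    (hρ : ∀ a, LinearMap.ker (ψ (Q.src a)) ≤ LinearMap.ker (homDiff f g ρ a)) :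
    ∃ h : ∀ i, Y i →ₗ[F] Y i, IsHom f g (fun i => ρ i - h i ∘ₗ ψ i) := by
  choose c hc using fun a => linearMap_exists_comp_eq_of_ker_le (hρ a)
  obtain ⟨h, rfl⟩ := hg c
  refine ⟨h, homDiff_eq_zero_iff.1 ?_⟩
  change homDiff f g (ρ - fun i => h i ∘ₗ ψ i) = 0
  rw [map_sub, homDiff_comp_right hψ, funext hc, sub_self]

/-- A family of subspaces stable under all the arrow maps. -/
def IsSubrep (f : LinRep Q F X) (U : ∀ i, Submodule F (X i)) : Prop :=
  ∀ a, U (Q.src a) ≤ (U (Q.tgt a)).comap (f a)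

theorem IsSubrep.sup {f : LinRep Q F X} {U W : ∀ i, Submodule F (X i)} (hU : IsSubrep f U)
    (hW : IsSubrep f W) : IsSubrep f (U ⊔ W) := fun a =>
  sup_le ((hU a).trans (Submodule.comap_mono le_sup_left))
    ((hW a).trans (Submodule.comap_mono le_sup_right))

theorem isSubrep_bot (f : LinRep Q F X) : IsSubrep f ⊥ := fun _ => bot_le

theorem IsHom.isSubrep_ker {f : LinRep Q F X} {g : LinRep Q F Y} {φ : ∀ i, X i →ₗ[F] Y i}
    (hφ : IsHom f g φ) : IsSubrep f (fun i => LinearMap.ker (φ i)) := fun a => by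
  rw [← LinearMap.ker_comp, hφ a]
  exact LinearMap.ker_le_ker_comp _ _

theorem IsHom.isSubrep_range {f : LinRep Q F X} {g : LinRep Q F Y} {φ : ∀ i, X i →ₗ[F] Y i}
    (hφ : IsHom f g φ) : IsSubrep g (fun i => LinearMap.range (φ i)) := fun a => by
  rw [← Submodule.map_le_iff_le_comap, ← LinearMap.range_comp, ← hφ a]
  exact LinearMap.range_comp_le_range _ _

/-- The restriction of a representation to a subrepresentation. -/
def restrict (f : LinRep Q F X) {U : ∀ i, Submodule F (X i)} (hU : IsSubrep f U) :
    LinRep Q F (fun i => U i) :=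
  fun a => (f a).restrict (hU a)

theorem isHom_subtype (f : LinRep Q F X) {U : ∀ i, Submodule F (X i)} (hU : IsSubrep f U) :
    IsHom (f.restrict hU) f (fun i => (U i).subtype) := fun _ => rfl

/-- Indecomposable representations. -/
def Indec (f : LinRep Q F X) : Prop :=
  (∃ i, Nontrivial (X i)) ∧
    ∀ U W : ∀ i, Submodule F (X i), IsSubrep f U → IsSubrep f W → IsCompl U W → U = ⊥ ∨ W = ⊥

theorem Indec.eq_bot_or_eq_top_of_retraction {f : LinRep Q F X} (hf : Indec f)
    {U : ∀ i, Submodule F (X i)} (hU : IsSubrep f U) {ρ : ∀ i, X i →ₗ[F] U i}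
    (hρ : IsHom f (f.restrict hU) ρ) (hρU : ∀ i (u : U i), ρ i u = u) : U = ⊥ ∨ U = ⊤ := by
  have hc : IsCompl U (fun i => LinearMap.ker (ρ i)) :=
    Pi.isCompl_iff.2 fun i => LinearMap.isCompl_of_proj (hρU i)
  exact (hf.2 U _ hU hρ.isSubrep_ker hc).imp_right fun h => by
    rw [h] at hc
    exact eq_top_of_isCompl_bot hc

theorem indec_restrict {f : LinRep Q F X} {U : ∀ i, Submodule F (X i)} (hU : IsSubrep f U)
    (hne : U ≠ ⊥)
    (h : ∀ A B, IsSubrep f A → IsSubrep f B → Disjoint A B → A ⊔ B = U → A = ⊥ ∨ B = ⊥) :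
    Indec (f.restrict hU) := by
  obtain ⟨i, hi⟩ := Function.ne_iff.1 hne
  refine ⟨⟨i, Submodule.nontrivial_iff_ne_bot.2 hi⟩, fun A B hA hB hAB => ?_⟩
  let incl (C : ∀ i, Submodule F (U i)) : ∀ i, Submodule F (X i) :=
    fun i => (C i).map (U i).subtype
  have hincl : ∀ C, IsSubrep (f.restrict hU) C → IsSubrep f (incl C) := by
    rintro C hC a _ ⟨v, hv, rfl⟩
    exact ⟨_, hC a hv, rfl⟩
  have hbot : ∀ C, incl C = ⊥ → C = ⊥ := fun C hC =>
    funext fun i => Submodule.map_injective_of_injective (U i).injective_subtype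
      ((congr_fun hC i).trans (Submodule.map_bot _).symm)
  have hdisj : Disjoint (incl A) (incl B) := Pi.disjoint_iff.2 fun i =>
    Submodule.disjoint_map (U i).injective_subtype (Pi.disjoint_iff.1 hAB.disjoint i)
  have hsup : incl A ⊔ incl B = U := funext fun i => by
    change (A i).map _ ⊔ (B i).map _ = _
    rw [← Submodule.map_sup, (Pi.isCompl_iff.1 hAB i).sup_eq_top, Submodule.map_subtype_top]
  exact (h _ _ (hincl A hA) (hincl B hB) hdisj hsup).imp (hbot A) (hbot B)

theorem exists_projection {U W : ∀ i, Submodule F (X i)} (hUW : Disjoint U W) :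
    ∃ ρ : ∀ i, X i →ₗ[F] U i, (∀ i (u : U i), ρ i u = u) ∧ ∀ i, W i ≤ LinearMap.ker (ρ i) := by
  have h : ∀ i, ∃ ρ : X i →ₗ[F] U i, (∀ u : U i, ρ u = u) ∧ W i ≤ LinearMap.ker ρ := fun i => by
    obtain ⟨C, hWC, hC⟩ := (Pi.disjoint_iff.1 hUW i).symm.exists_isCompl
    refine ⟨Submodule.projectionOnto (U i) C hC.symm,
      Submodule.projectionOnto_apply_left _, fun w hw => ?_⟩
    exact Submodule.projectionOnto_apply_of_mem_right _ (hWC hw)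
  choose ρ hρ using h
  exact ⟨ρ, fun i => (hρ i).1, fun i => (hρ i).2⟩

theorem homDiff_restrict_eq_zero_of_mem_sup {f : LinRep Q F X} {U W : ∀ i, Submodule F (X i)}
    (hU : IsSubrep f U) (hW : IsSubrep f W) {ρ : ∀ i, X i →ₗ[F] U i}
    (hρU : ∀ i (u : U i), ρ i u = u) (hρW : ∀ i, W i ≤ LinearMap.ker (ρ i)) (a : Q.A) :
    (U ⊔ W) (Q.src a) ≤ LinearMap.ker (homDiff f (f.restrict hU) ρ a) := by
  refine sup_le (fun u hu => ?_) fun w hw => ?_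
  · have h₁ : ρ (Q.src a) u = ⟨u, hu⟩ := hρU _ ⟨u, hu⟩
    have h₂ : ρ (Q.tgt a) (f a u) = ⟨f a u, hU a hu⟩ := hρU _ ⟨f a u, hU a hu⟩
    simp [homDiff, h₁, h₂, restrict, LinearMap.restrict_apply]
  · have h₁ : ρ (Q.src a) w = 0 := hρW _ hw
    have h₂ : ρ (Q.tgt a) (f a w) = 0 := hρW _ (hW a hw)
    simp [homDiff, h₁, h₂]

variable [∀ i, FiniteDimensional F (X i)]

/-- A minimal `U` works: if `U = A ⊕ B` properly then `R ≤ (A ⊔ W) ⊓ (B ⊔ W) = W`. -/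
theorem exists_indec_summand {f : LinRep Q F X} {K R : ∀ i, Submodule F (X i)}
    (hK : IsSubrep f K) (hRK : R ≤ K) (hR : R ≠ ⊥) :
    ∃ (U W : ∀ i, Submodule F (X i)) (hU : IsSubrep f U), IsSubrep f W ∧ Disjoint U W ∧
      U ⊔ W = K ∧ ¬ R ≤ W ∧ Indec (f.restrict hU) := by
  let P (U : ∀ i, Submodule F (X i)) : Prop := IsSubrep f U ∧
    ∃ W, IsSubrep f W ∧ Disjoint U W ∧ U ⊔ W = K ∧ ¬ R ≤ W
  have hP : P K := ⟨hK, ⊥, isSubrep_bot f, disjoint_bot_right, sup_bot_eq K, by rwa [le_bot_iff]⟩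
  obtain ⟨U, ⟨hU, W, hW, hUW, hsup, hRW⟩, hmin⟩ := exists_minimal_of_wellFoundedLT P ⟨K, hP⟩
  have hmain : ∀ A B, IsSubrep f A → IsSubrep f B → Disjoint A B → A ⊔ B = U → B ≠ ⊥ →
      R ≤ B ⊔ W := by
    rintro A B hA hB hAB rfl hB0
    by_contra hR'
    have hA' : P A := ⟨hA, B ⊔ W, hB.sup hW, hAB.disjoint_sup_right_of_disjoint_sup_left hUW,
      (sup_assoc A B W).symm.trans hsup, hR'⟩
    exact hB0 (hAB.symm.eq_bot_of_le (le_sup_right.trans (hmin hA' le_sup_left)))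
  refine ⟨U, W, hU, hW, hUW, hsup, hRW, indec_restrict hU ?_ fun A B hA hB hAB hAU => ?_⟩
  · rintro rfl
    exact hRW (hRK.trans (by rw [← hsup, bot_sup_eq]))
  · by_contra! h
    apply hRW
    rw [← sup_inf_sup_eq_of_disjoint hAB (c := W) (hAU.symm ▸ hUW)]
    exact le_inf (hmain B A hB hA hAB.symm ((sup_comm B A).trans hAU) h.1)
      (hmain A B hA hB hAB hAU h.2)

/-- The rank of a family of linear maps, added up over the vertices. -/
noncomputable def totalRank (φ : ∀ i, X i →ₗ[F] Y i) : ℕ :=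
  ∑ i, finrank F (LinearMap.range (φ i))

theorem ker_eq_of_totalRank_le {φ : ∀ i, X i →ₗ[F] Y i} {ψ : ∀ i, X i →ₗ[F] Z i}
    (hker : ∀ i, LinearMap.ker (φ i) ≤ LinearMap.ker (ψ i)) (hrank : totalRank φ ≤ totalRank ψ)
    (i : Q.V) : LinearMap.ker (φ i) = LinearMap.ker (ψ i) := by
  have hφ j := LinearMap.finrank_range_add_finrank_ker (φ j)
  have hψ j := LinearMap.finrank_range_add_finrank_ker (ψ j)
  have hle : ∀ j ∈ Finset.univ,
      finrank F (LinearMap.range (ψ j)) ≤ finrank F (LinearMap.range (φ j)) := fun j _ => by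
    have := Submodule.finrank_mono (hker j)
    have := hφ j
    have := hψ j
    lia
  have heq := (Finset.sum_eq_sum_iff_of_le hle).1 (le_antisymm (Finset.sum_le_sum hle) hrank)
    i (Finset.mem_univ i)
  exact Submodule.eq_of_le_of_finrank_eq (hker i) (by have := hφ i; have := hψ i; lia)

theorem Indec.comp_self_eq_zero_of_minimal {f : LinRep Q F X} (hf : Indec f)
    {θ : ∀ i, X i →ₗ[F] X i} (hθ : IsHom f f θ)
    (hmin : ∀ ψ, IsHom f f ψ → ψ ≠ 0 → totalRank θ ≤ totalRank ψ)
    (hker : (fun i => LinearMap.ker (θ i)) ≠ ⊥) (h0 : θ ≠ 0) (i : Q.V) : θ i ∘ₗ θ i = 0 := by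
  by_contra hsq
  have hsq : (fun i => θ i ∘ₗ θ i) ≠ 0 := fun h => hsq (congr_fun h i)
  have hkersq : ∀ j, LinearMap.ker (θ j) = LinearMap.ker (θ j ∘ₗ θ j) :=
    ker_eq_of_totalRank_le (fun j => LinearMap.ker_le_ker_comp _ _) (hmin _ (hθ.comp hθ) hsq)
  have hcompl : IsCompl (fun i => LinearMap.range (θ i)) (fun i => LinearMap.ker (θ i)) := by
    refine Pi.isCompl_iff.2 fun j => (Submodule.isCompl_iff_disjoint _ _
      (LinearMap.finrank_range_add_finrank_ker (θ j)).ge).2 ?_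
    rw [Submodule.disjoint_def]
    rintro _ ⟨v, rfl⟩ hv
    have : v ∈ LinearMap.ker (θ j ∘ₗ θ j) := hv
    rwa [← hkersq] at this
  refine (hf.2 _ _ hθ.isSubrep_range hθ.isSubrep_ker hcompl).elim (fun h => h0 ?_) hker
  exact funext fun j => LinearMap.range_eq_bot.1 (congr_fun h j)

/-- The induction hypothesis of Ringel's lemma: every proper subrepresentation that is
indecomposable has no self-extensions. -/
def ProperIndecSubrepsRigid (f : LinRep Q F X) : Prop :=
  ∀ (U : ∀ i, Submodule F (X i)) (hU : IsSubrep f U), U ≠ ⊤ → Indec (f.restrict hU) →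
    Function.Surjective (homDiff (f.restrict hU) (f.restrict hU))

theorem ker_eq_ker_comp_of_minimal {f : LinRep Q F X} {θ : ∀ i, X i →ₗ[F] X i}
    (hmin : ∀ ψ, IsHom f f ψ → ψ ≠ 0 → totalRank θ ≤ totalRank ψ)
    {U W : ∀ i, Submodule F (X i)} (hU : IsSubrep f U) {ρ : ∀ i, X i →ₗ[F] U i}
    (hρU : ∀ i (u : U i), ρ i u = u) (hρW : ∀ i, W i ≤ LinearMap.ker (ρ i))
    (hρθ : IsHom f (f.restrict hU) fun i => ρ i ∘ₗ θ i)
    (hrange : (fun i => LinearMap.range (θ i)) ≤ U ⊔ W)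
    (hrangeW : ¬ (fun i => LinearMap.range (θ i)) ≤ W) (i : Q.V) :
    LinearMap.ker (θ i) = LinearMap.ker (ρ i ∘ₗ θ i) := by
  rw [← LinearMap.ker_comp_of_ker_eq_bot (ρ i ∘ₗ θ i) (U i).ker_subtype]
  refine ker_eq_of_totalRank_le (fun j v hv => ?_)
    (hmin _ ((f.isHom_subtype hU).comp hρθ) fun h => ?_) i
  · simp [LinearMap.mem_ker.1 hv]
  · refine hrangeW fun j => ?_
    rintro _ ⟨v, rfl⟩
    have hv : ρ j (θ j v) = 0 := by simpa using LinearMap.congr_fun (congr_fun h j) v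
    exact mem_of_mem_sup_of_retraction (hρU j) (hρW j) (hrange j ⟨v, rfl⟩) hv

/-- Otherwise `θ² = 0`. Write `ker θ = U ⊕ W` with `U` indecomposable and `im θ ≰ W`. The
projection `ρ` onto `U` gives an endomorphism `ρ ∘ θ` with the same kernel as `θ`, and
`Ext¹(U, U) = 0` lets us correct `ρ` to a retraction of the whole representation onto `U`. -/
theorem Indec.ker_eq_bot_of_minimal {f : LinRep Q F X} (hf : Indec f)
    (hrigid : ProperIndecSubrepsRigid f) {θ : ∀ i, X i →ₗ[F] X i} (hθ : IsHom f f θ)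
    (h0 : θ ≠ 0) (hmin : ∀ ψ, IsHom f f ψ → ψ ≠ 0 → totalRank θ ≤ totalRank ψ) :
    (fun i => LinearMap.ker (θ i)) = ⊥ := by
  by_contra hker
  have hrange : (fun i => LinearMap.range (θ i)) ≤ fun i => LinearMap.ker (θ i) := fun i =>
    LinearMap.range_le_ker_iff.2 (hf.comp_self_eq_zero_of_minimal hθ hmin hker h0 i)
  have hrange0 : (fun i => LinearMap.range (θ i)) ≠ ⊥ := fun h =>
    h0 (funext fun i => LinearMap.range_eq_bot.1 (congr_fun h i))
  obtain ⟨U, W, hU, hW, hUW, hsup, hRW, hUindec⟩ :=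
    exists_indec_summand hθ.isSubrep_ker hrange hrange0
  have hUker : U ≤ fun i => LinearMap.ker (θ i) := hsup ▸ le_sup_left
  have hUbot : U ≠ ⊥ := fun h => hRW (hrange.trans (by rw [← hsup, h, bot_sup_eq]))
  have hUtop : U ≠ ⊤ := by
    rintro rfl
    exact h0 (funext fun i => LinearMap.ker_eq_top.1 (top_le_iff.1 (hUker i)))
  obtain ⟨ρ, hρU, hρW⟩ := exists_projection hUW
  have hρker : ∀ a, LinearMap.ker (θ (Q.src a)) ≤
      LinearMap.ker (homDiff f (f.restrict hU) ρ a) := fun a => by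
    rw [← congr_fun hsup]
    exact homDiff_restrict_eq_zero_of_mem_sup hU hW hρU hρW a
  have hρθ : IsHom f (f.restrict hU) (fun i => ρ i ∘ₗ θ i) := by
    rw [← homDiff_eq_zero_iff, homDiff_comp_right hθ]
    exact funext fun a => LinearMap.range_le_ker_iff.1 ((hrange _).trans (hρker a))
  have hkerρθ := ker_eq_ker_comp_of_minimal hmin hU hρU hρW hρθ (hrange.trans hsup.ge) hRW
  obtain ⟨h, hhom⟩ := exists_isHom_sub_comp (hrigid U hU hUtop hUindec) hρθ ρ
    fun a => (hkerρθ _).ge.trans (hρker a)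
  refine (hf.eq_bot_or_eq_top_of_retraction hU hhom fun i u => ?_).elim hUbot hUtop
  have hu : θ i u = 0 := hUker i u.2
  simp [hu, hρU]

/-- Ringel's lemma. -/
theorem Indec.ker_eq_bot {f : LinRep Q F X} (hf : Indec f) (hrigid : ProperIndecSubrepsRigid f)
    {φ : ∀ i, X i →ₗ[F] X i} (hφ : IsHom f f φ) (hφ0 : φ ≠ 0) (i : Q.V) :
    LinearMap.ker (φ i) = ⊥ := by
  let P (ψ : ∀ i, X i →ₗ[F] X i) : Prop := IsHom f f ψ ∧ ψ ≠ 0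
  obtain ⟨θ, ⟨hθ, hθ0⟩, hθmin⟩ := exists_minimalFor_of_wellFoundedLT P totalRank ⟨φ, hφ, hφ0⟩
  have hmin : ∀ ψ, IsHom f f ψ → ψ ≠ 0 → totalRank θ ≤ totalRank ψ := fun ψ hψ hψ0 =>
    (le_total _ _).elim id (hθmin ⟨hψ, hψ0⟩)
  have hker := congr_fun (hf.ker_eq_bot_of_minimal hrigid hθ hθ0 hmin)
  rw [← ker_eq_of_totalRank_le (fun j => (hker j).trans_le bot_le) (hmin φ hφ hφ0)]
  exact hker i

end LinRep

end LinearRepresentations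

section Bricks

open Module

universe u

namespace LinRep

variable {Q : FinQuiver} {F : Type*} [Field F]
variable {X : Q.V → Type u} [∀ i, AddCommGroup (X i)] [∀ i, Module F (X i)]

/-- The endomorphism algebra of a representation. -/
def endAlg (f : LinRep Q F X) : Subalgebra F (∀ i, Module.End F (X i)) where
  carrier := {φ | IsHom f f φ}
  mul_mem' hφ hψ := hφ.comp hψ
  add_mem' hφ hψ a := by
    simp only [Pi.add_apply, LinearMap.add_comp, LinearMap.comp_add, hφ a, hψ a]
  algebraMap_mem' c a := by
    ext v
    exact (map_smul (f a) c v).symm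

theorem toSubmodule_endAlg (f : LinRep Q F X) :
    Subalgebra.toSubmodule f.endAlg = LinearMap.ker (homDiff f f) :=
  Submodule.ext fun _ => homDiff_eq_zero_iff.symm

variable [∀ i, FiniteDimensional F (X i)]

/-- If nonzero endomorphisms are injective, `endAlg f` is a division ring acting on each `X i`. -/
theorem finrank_endAlg_dvd {f : LinRep Q F X} (hX : ∃ i, Nontrivial (X i))
    (hker : ∀ φ, IsHom f f φ → φ ≠ 0 → ∀ i, LinearMap.ker (φ i) = ⊥) (i : Q.V) :
    finrank F f.endAlg ∣ finrank F (X i) := by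
  obtain ⟨j, _⟩ := hX
  have : Nontrivial (∀ i, Module.End F (X i)) := Pi.nontrivial_at j
  have : NoZeroDivisors f.endAlg := ⟨fun {φ ψ} hφψ => or_iff_not_imp_left.2 fun hφ => by
    have hinj := hker φ.1 φ.2 (fun h => hφ (Subtype.ext h))
    ext i v
    refine LinearMap.ker_eq_bot'.1 (hinj i) _ ?_
    exact LinearMap.congr_fun (congr_fun (congrArg Subtype.val hφψ) i) v⟩
  have : IsDomain f.endAlg := NoZeroDivisors.to_isDomain _
  let _ : DivisionRing f.endAlg := divisionRingOfFiniteDimensional F f.endAlg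
  let _ : Module f.endAlg (X i) := Module.compHom (X i)
    ((Pi.evalRingHom (fun i => Module.End F (X i)) i).comp f.endAlg.val.toRingHom)
  have : IsScalarTower F f.endAlg (X i) := ⟨fun _ _ _ => rfl⟩
  exact Dvd.intro _ (finrank_mul_finrank F f.endAlg (X i))

/-- `Ext¹(f, g)`. -/
abbrev Ext {Y : Q.V → Type*} [∀ i, AddCommGroup (Y i)] [∀ i, Module F (Y i)]
    (f : LinRep Q F X) (g : LinRep Q F Y) : Type _ :=
  (∀ a, X (Q.src a) →ₗ[F] Y (Q.tgt a)) ⧸ LinearMap.range (homDiff f g)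

theorem eulerForm_finrank {Y : Q.V → Type*} [∀ i, AddCommGroup (Y i)] [∀ i, Module F (Y i)]
    [∀ i, FiniteDimensional F (Y i)] (f : LinRep Q F X) (g : LinRep Q F Y) :
    Q.eulerForm (fun i => (finrank F (X i) : ℤ)) (fun i => (finrank F (Y i) : ℤ)) =
      finrank F (LinearMap.ker (homDiff f g)) - finrank F (Ext f g) := by
  have hker := LinearMap.finrank_range_add_finrank_ker (homDiff f g)
  have hext := Submodule.finrank_quotient_add_finrank (LinearMap.range (homDiff f g))
  rw [finrank_pi_fintype] at hker hext
  simp only [finrank_linearMap] at hker hext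
  zify at hker hext
  rw [FinQuiver.eulerForm]
  lia

theorem endAlg_eq_bot_and_ext_eq_zero {δ : Q.V → ℕ} (hδ : Q.IsMinimalImaginaryRoot δ)
    {f : LinRep Q F X} (hX : ∃ i, Nontrivial (X i)) (hle : ∀ i, finrank F (X i) ≤ δ i)
    (hker : ∀ φ, IsHom f f φ → φ ≠ 0 → ∀ i, LinearMap.ker (φ i) = ⊥) :
    f.endAlg = ⊥ ∧ ((fun i => finrank F (X i)) ≠ δ → finrank F (Ext f f) = 0) := by
  have hdvd := finrank_endAlg_dvd hX hker
  obtain ⟨j, _⟩ := hX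
  have hpos : 0 < finrank F f.endAlg := Nat.pos_of_dvd_of_pos (hdvd j) finrank_pos
  have htits : Q.titsForm (fun i => (finrank F (X i) : ℤ)) =
      finrank F f.endAlg - finrank F (Ext f f) := by
    rw [← Subalgebra.finrank_toSubmodule, toSubmodule_endAlg]
    exact eulerForm_finrank f f
  have : Nontrivial (∀ i, Module.End F (X i)) := Pi.nontrivial_at j
  rw [← Subalgebra.finrank_eq_one_iff]
  by_cases hdim : (fun i => finrank F (X i)) = δ
  · subst hdim
    have : Nonempty Q.V := ⟨j⟩
    exact ⟨hδ.eq_one_of_forall_dvd hdvd, fun h => absurd rfl h⟩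
  · have hne : (fun i => finrank F (X i)) ≠ 0 := fun h => finrank_pos.ne' (congr_fun h j)
    have hsq := hδ.sq_le_titsForm_of_forall_dvd hle hne hdim hdvd
    have hone : finrank F f.endAlg = 1 := by nlinarith
    exact ⟨hone, fun _ => by rw [htits, hone] at hsq; lia⟩

theorem Indec.endAlg_eq_bot_and_ext_eq_zero {δ : Q.V → ℕ} (hδ : Q.IsMinimalImaginaryRoot δ)
    {f : LinRep Q F X} (hf : Indec f) (hle : ∀ i, finrank F (X i) ≤ δ i) :
    f.endAlg = ⊥ ∧ ((fun i => finrank F (X i)) ≠ δ → finrank F (Ext f f) = 0) := by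
  induction hn : ∑ i, finrank F (X i) using Nat.strong_induction_on generalizing X with
  | _ n ih =>
  refine LinRep.endAlg_eq_bot_and_ext_eq_zero hδ hf.1 hle
    fun φ hφ hφ0 => hf.ker_eq_bot (fun U hU hUtop hUindec => ?_) hφ hφ0
  obtain ⟨j, hj⟩ := Function.ne_iff.1 hUtop
  have hUle : ∀ i, finrank F (U i) ≤ finrank F (X i) := fun i => (U i).finrank_le
  have hUlt : finrank F (U j) < finrank F (X j) := Submodule.finrank_lt hj
  have hsum : ∑ i, finrank F (U i) < n :=
    hn ▸ Finset.sum_lt_sum (fun i _ => hUle i) ⟨j, Finset.mem_univ j, hUlt⟩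
  have hext := (ih _ hsum hUindec (fun i => (hUle i).trans (hle i)) rfl).2
    fun h => (hUlt.trans_le (hle j)).ne (congr_fun h j)
  rw [← LinearMap.range_eq_top, ← Submodule.Quotient.subsingleton_iff]
  exact finrank_zero_iff.1 hext

end LinRep

end Bricks

section MatrixRepresentations

namespace LinRep

variable {Q : FinQuiver} {F : Type*} [Field F]
variable {X : Q.V → Type*} [∀ i, AddCommGroup (X i)] [∀ i, Module F (X i)]

theorem projection_mem_endAlg {f : LinRep Q F X} {U W : ∀ i, Submodule F (X i)}
    (hU : IsSubrep f U) (hW : IsSubrep f W) (hUW : ∀ i, IsCompl (U i) (W i)) :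
    (fun i => (U i).projection (W i) (hUW i)) ∈ f.endAlg := fun a => LinearMap.ext fun v => by
  obtain ⟨u, hu, w, hw, rfl⟩ : ∃ u ∈ U (Q.src a), ∃ w ∈ W (Q.src a), u + w = v :=
    Submodule.mem_sup.1 ((hUW _).sup_eq_top ▸ Submodule.mem_top)
  have hfu := Submodule.projection_apply_of_mem_left (hUW (Q.tgt a)) (hU a hu)
  have hfw := (Submodule.projection_apply_eq_zero_iff (hUW (Q.tgt a))).2 (hW a hw)
  simp only [LinearMap.comp_apply, map_add, Submodule.projection_apply_of_mem_left _ hu,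
    (Submodule.projection_apply_eq_zero_iff _).2 hw, hfu, hfw, map_zero]

theorem indec_iff_idempotents {f : LinRep Q F X} :
    Indec f ↔ (∃ i, Nontrivial (X i)) ∧ ∀ e ∈ f.endAlg, IsIdempotentElem e → e = 0 ∨ e = 1 := by
  refine and_congr_right fun _ => ⟨fun h e he hidem => ?_, fun h U W hU hW hUW => ?_⟩
  · have hidem : ∀ i, IsIdempotentElem (e i) := fun i => congr_fun hidem i
    have hc : IsCompl (fun i => LinearMap.range (e i)) (fun i => LinearMap.ker (e i)) :=
      Pi.isCompl_iff.2 fun i => LinearMap.IsIdempotentElem.isCompl (hidem i)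
    refine (h _ _ (IsHom.isSubrep_range he) (IsHom.isSubrep_ker he) hc).imp
      (fun h0 => funext fun i => LinearMap.range_eq_bot.1 (congr_fun h0 i))
      fun h0 => funext fun i => ?_
    have hinj : Function.Injective (e i) := LinearMap.ker_eq_bot.1 (congr_fun h0 i)
    exact LinearMap.ext fun v => hinj (LinearMap.congr_fun (hidem i) v)
  · have hUW := Pi.isCompl_iff.1 hUW
    refine (h _ (projection_mem_endAlg hU hW hUW)
      (funext fun i => Submodule.isIdempotentElem_projection (hUW i))).imp
      (fun h0 => funext fun i => ?_) fun h1 => funext fun i => ?_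
    · rw [← Submodule.range_projection (hUW i), congr_fun h0 i]
      exact LinearMap.range_zero
    · rw [← Submodule.ker_projection (hUW i), congr_fun h1 i]
      exact LinearMap.ker_id

end LinRep

namespace MRep

variable {Q : FinQuiver} {k : Type} [Field k] {d : Q.V → ℕ}

/-- The linear maps `k^{d (s a)} → k^{d (t a)}` given by the matrices of a representation. -/
def toLinRep (x : MRep Q k d) : LinRep Q k (fun i => Fin (d i) → k) :=
  fun a => Matrix.toLin' (x a)

theorem pos_iff_nontrivial_fin_fun {n : ℕ} : 0 < n ↔ Nontrivial (Fin n → k) := by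
  rw [← Module.finrank_pos_iff (R := k), Module.finrank_fin_fun]

theorem mIndec_iff_indec {x : MRep Q k d} : MIndec x ↔ x.toLinRep.Indec := by
  refine and_congr (exists_congr fun i => ?_) ?_
  · exact pos_iff_nontrivial_fin_fun
  · simp only [Pi.isCompl_iff, funext_iff]
    exact Iff.rfl

/-- The endomorphism algebra of a representation, acting by matrices. -/
def endAlg (x : MRep Q k d) : Subalgebra k (∀ i, Matrix (Fin (d i)) (Fin (d i)) k) where
  carrier := {e | ∀ a, e (Q.tgt a) * x a = x a * e (Q.src a)}
  mul_mem' he he' a := by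
    simp only [Pi.mul_apply, Matrix.mul_assoc, he' a]
    rw [← Matrix.mul_assoc, he a, Matrix.mul_assoc]
  add_mem' he he' a := by simp only [Pi.add_apply, Matrix.add_mul, Matrix.mul_add, he a, he' a]
  algebraMap_mem' c a := by
    simp only [Pi.algebraMap_apply, Algebra.algebraMap_eq_smul_one, Matrix.smul_mul,
      Matrix.mul_smul, Matrix.one_mul, Matrix.mul_one]

variable (k d) in
/-- Families of square matrices as families of linear endomorphisms. -/
noncomputable abbrev toLinPi :
    (∀ i, Matrix (Fin (d i)) (Fin (d i)) k) ≃ₐ[k] ∀ i, Module.End k (Fin (d i) → k) :=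
  AlgEquiv.piCongrRight fun _ => Matrix.toLinAlgEquiv'

theorem mem_endAlg_iff {x : MRep Q k d} {e : ∀ i, Matrix (Fin (d i)) (Fin (d i)) k} :
    e ∈ x.endAlg ↔ toLinPi k d e ∈ x.toLinRep.endAlg := by
  refine forall_congr' fun a => ?_
  rw [← Matrix.toLin'.injective.eq_iff, Matrix.toLin'_mul, Matrix.toLin'_mul]
  rfl

theorem mIndec_iff_idempotents {x : MRep Q k d} :
    MIndec x ↔ (∃ i, 0 < d i) ∧ ∀ e ∈ x.endAlg, IsIdempotentElem e → e = 0 ∨ e = 1 := by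
  rw [mIndec_iff_indec, LinRep.indec_iff_idempotents, (toLinPi k d).surjective.forall]
  refine and_congr (exists_congr fun i => pos_iff_nontrivial_fin_fun.symm)
    (forall_congr' fun e => ?_)
  simp only [mem_endAlg_iff, IsIdempotentElem, ← map_mul, (toLinPi k d).injective.eq_iff,
    EmbeddingLike.map_eq_zero_iff, EmbeddingLike.map_eq_one_iff]

/-- A brick is a representation with only scalar endomorphisms. -/
def IsBrick (x : MRep Q k d) : Prop := x.endAlg = ⊥

theorem IsBrick.mIndec {x : MRep Q k d} (hx : x.IsBrick) (hd : ∃ i, 0 < d i) : MIndec x := by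
  refine mIndec_iff_idempotents.2 ⟨hd, fun e he hidem => ?_⟩
  obtain ⟨c, rfl⟩ := Algebra.mem_bot.1 (hx ▸ he : e ∈ ⊥)
  obtain ⟨i, hi⟩ := hd
  have : Nonempty (Fin (d i)) := Fin.pos_iff_nonempty.1 hi
  have : Nontrivial (∀ i, Matrix (Fin (d i)) (Fin (d i)) k) := Pi.nontrivial_at i
  rw [IsIdempotentElem, ← map_mul, (algebraMap k _).injective.eq_iff] at hidem
  exact (IsIdempotentElem.iff_eq_zero_or_one.1 hidem).imp
    (fun h => by rw [h, map_zero]) fun h => by rw [h, map_one]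

theorem isBrick_of_mIndec {δ : Q.V → ℕ} (hδ : Q.IsMinimalImaginaryRoot δ) (hle : d ≤ δ)
    {x : MRep Q k d} (hx : MIndec x) : x.IsBrick := by
  have hbot := ((mIndec_iff_indec.1 hx).endAlg_eq_bot_and_ext_eq_zero hδ fun i => by
    rw [Module.finrank_fin_fun]; exact hle i).1
  refine eq_bot_iff.2 fun e he => ?_
  obtain ⟨c, hc⟩ := Algebra.mem_bot.1 (hbot ▸ mem_endAlg_iff.1 he)
  exact Algebra.mem_bot.2 ⟨c, (toLinPi k d).injective (by rw [AlgEquiv.commutes, hc])⟩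

theorem mIndec_of_injective {K : Type} [Field K] {x : MRep Q k d} {y : MRep Q K d} (hy : MIndec y)
    {φ : (∀ i, Matrix (Fin (d i)) (Fin (d i)) k) →+* ∀ i, Matrix (Fin (d i)) (Fin (d i)) K}
    (hφ : Function.Injective φ) (hend : ∀ e ∈ x.endAlg, φ e ∈ y.endAlg) : MIndec x := by
  have ⟨hd, h⟩ := mIndec_iff_idempotents.1 hy
  refine mIndec_iff_idempotents.2 ⟨hd, fun e he hidem => ?_⟩
  exact (h (φ e) (hend e he) (hidem.map φ)).imp
    ((map_eq_zero_iff φ hφ).1) ((map_eq_one_iff φ hφ).1)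

/-- Apply a field homomorphism to all matrix entries. -/
def map {K : Type} [Field K] (f : k →+* K) (x : MRep Q k d) : MRep Q K d :=
  fun a => (x a).map f

theorem map_injective {K : Type} [Field K] (f : k →+* K) :
    Function.Injective (map f : MRep Q k d → MRep Q K d) := fun _ _ h =>
  funext fun a => Matrix.map_injective f.injective (congr_fun h a)

theorem mIndec_of_map {K : Type} [Field K] (f : k →+* K) {x : MRep Q k d}
    (h : MIndec (x.map f)) : MIndec x :=
  mIndec_of_injective h (φ := RingHom.pi fun i => f.mapMatrix.comp (Pi.evalRingHom _ i))
    (fun _ _ he => funext fun i => Matrix.map_injective f.injective (congr_fun he i))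
    fun e he a => by
      change (e _).map f * (x a).map f = (x a).map f * (e _).map f
      rw [← Matrix.map_mul, he a, Matrix.map_mul]

section ScalarExtension

variable {K : Type} [Field K] [Algebra k K]

theorem map_dual_mem_endAlg {x : MRep Q k d} {E : ∀ i, Matrix (Fin (d i)) (Fin (d i)) K}
    (hE : E ∈ (mapRep K x).endAlg) (l : Module.Dual k K) : (fun i => (E i).map l) ∈ x.endAlg := by
  intro a
  ext r s
  have hrs := congrArg l (congr_fun (congr_fun (hE a) r) s)
  simp only [Matrix.mul_apply, mapRep, Matrix.map_apply, map_sum] at hrs ⊢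
  simp only [mul_comm (E _ _ _) (algebraMap k K _), ← Algebra.smul_def, map_smul,
    smul_eq_mul] at hrs
  simpa only [mul_comm (l _)] using hrs

theorem IsBrick.mapRep {x : MRep Q k d} (hx : x.IsBrick) (hd : ∃ i, 0 < d i) :
    (mapRep K x).IsBrick := by
  refine eq_bot_iff.2 fun E hE => ?_
  obtain ⟨j, hj⟩ := hd
  refine Algebra.mem_bot.2 ⟨E j ⟨0, hj⟩ ⟨0, hj⟩, funext fun i => Matrix.ext fun r s => ?_⟩
  rw [← sub_eq_zero, ← Module.forall_dual_apply_eq_zero_iff k]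
  intro l
  obtain ⟨c, hc⟩ := Algebra.mem_bot.1 (hx ▸ map_dual_mem_endAlg hE l)
  have hentry : ∀ i r s, l (E i r s) = algebraMap k (Matrix _ _ k) c r s := fun i r s =>
    (congr_fun (congr_fun (congr_fun hc i) r) s).symm
  simp only [Matrix.algebraMap_matrix_apply] at hentry
  simp only [Pi.algebraMap_apply, Matrix.algebraMap_matrix_apply, map_sub, hentry i r s]
  split_ifs <;> simp [hentry]

end ScalarExtension

end MRep

end MatrixRepresentations

section GroupActions

open MulAction

theorem natCard_mul_natCard_of_stabilizer_equiv {G X S : Type*} [Group G] [MulAction G X]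
    (e : ∀ x : X, stabilizer G x ≃ S) :
    Nat.card X * Nat.card S = Nat.card (Quotient (orbitRel G X)) * Nat.card G := by
  rw [← Nat.card_prod, ← Nat.card_prod, ← Nat.card_congr (sigmaFixedByEquivOrbitsProdGroup G X)]
  refine Nat.card_congr ?_
  calc X × S ≃ Σ x : X, stabilizer G x :=
        (Equiv.sigmaEquivProd X S).symm.trans (Equiv.sigmaCongrRight fun x => (e x).symm)
    _ ≃ {p : X × G // p.2 • p.1 = p.1} :=
        (Equiv.subtypeProdEquivSigmaSubtype fun x g => g ∈ stabilizer G x).symm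
    _ ≃ {p : G × X // p.1 • p.2 = p.2} := (Equiv.prodComm X G).subtypeEquiv fun _ => Iff.rfl
    _ ≃ Σ g : G, fixedBy X g := Equiv.subtypeProdEquivSigmaSubtype fun g x => g • x = x

namespace MRep

instance {Q : FinQuiver} {k : Type} [Finite k] {d : Q.V → ℕ} : Finite (MRep Q k d) :=
  inferInstanceAs (Finite (∀ _, Matrix _ _ k))

variable {Q : FinQuiver} {k : Type} [Field k] {d : Q.V → ℕ}

/-- The group `∏ᵢ GL_{dᵢ}(k)` acts on representations by simultaneous conjugation. -/
instance : MulAction (∀ i, GL (Fin (d i)) k) (MRep Q k d) where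
  smul g x a := (g (Q.tgt a)).1 * x a * ((g (Q.src a))⁻¹).1
  one_smul x := funext fun a => by
    change (1 : Matrix _ _ k) * x a * ((1 : GL _ k)⁻¹).1 = x a
    rw [inv_one, Units.val_one, Matrix.one_mul, Matrix.mul_one]
  mul_smul g h x := funext fun a => by
    change ((g * h) _).1 * x a * ((g * h) _)⁻¹.1 = (g _).1 * ((h _).1 * x a * (h _)⁻¹.1) * (g _)⁻¹.1
    simp only [Pi.mul_apply, mul_inv_rev, Units.val_mul, Matrix.mul_assoc]

theorem mIso_iff {x y : MRep Q k d} : MIso x y ↔ ∃ g : ∀ i, GL (Fin (d i)) k, g • x = y :=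
  exists_congr fun _ => funext_iff.symm.trans eq_comm

theorem smul_eq_iff {g : ∀ i, GL (Fin (d i)) k} {x y : MRep Q k d} :
    g • x = y ↔ ∀ a, (g (Q.tgt a)).1 * x a = y a * (g (Q.src a)).1 := by
  refine funext_iff.trans (forall_congr' fun a => ?_)
  change (g _).1 * x a * (g _)⁻¹.1 = y a ↔ _
  constructor <;> intro h
  · rw [← h, Matrix.mul_assoc _ _ (g _).1, Units.inv_mul, Matrix.mul_one]
  · rw [h, Matrix.mul_assoc, Units.mul_inv, Matrix.mul_one]

theorem mIndec_of_smul {g : ∀ i, GL (Fin (d i)) k} {x : MRep Q k d} (h : MIndec (g • x)) :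
    MIndec x := by
  let u := MulEquiv.piUnits.symm g
  refine mIndec_of_injective h (φ := MulSemiringAction.toRingHom _ _ (ConjAct.toConjAct u))
    (MulAction.injective _) fun e he a => ?_
  let s := Q.src a
  let t := Q.tgt a
  calc (g t).1 * e t * (g t)⁻¹.1 * ((g t).1 * x a * (g s)⁻¹.1)
      = (g t).1 * (e t * ((g t)⁻¹.1 * (g t).1) * x a) * (g s)⁻¹.1 := by
        simp only [Matrix.mul_assoc]
    _ = (g t).1 * (x a * ((g s)⁻¹.1 * (g s).1) * e s) * (g s)⁻¹.1 := by
        rw [Units.inv_mul, Units.inv_mul, Matrix.mul_one, Matrix.mul_one, he a]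
    _ = (g t).1 * x a * (g s)⁻¹.1 * ((g s).1 * e s * (g s)⁻¹.1) := by
        simp only [Matrix.mul_assoc]

theorem mIndec_smul {g : ∀ i, GL (Fin (d i)) k} {x : MRep Q k d} (h : MIndec x) :
    MIndec (g • x) :=
  mIndec_of_smul (g := g⁻¹) (by rwa [inv_smul_smul])

instance : MulAction (∀ i, GL (Fin (d i)) k) {x : MRep Q k d // MIndec x} where
  smul g x := ⟨g • x.1, mIndec_smul x.2⟩
  one_smul x := Subtype.ext (one_smul _ x.1)
  mul_smul g h x := Subtype.ext (mul_smul g h x.1)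

/-- The scalar matrices in `∏ᵢ GL_{dᵢ}(k)`. -/
def scalarUnits : kˣ →* ∀ i, GL (Fin (d i)) k :=
  MonoidHom.pi fun _ => Units.map (algebraMap k (Matrix _ _ k)).toMonoidHom

theorem scalarUnits_injective (hd : ∃ i, 0 < d i) :
    Function.Injective (scalarUnits : kˣ →* ∀ i, GL (Fin (d i)) k) := fun c c' h => by
  obtain ⟨i, hi⟩ := hd
  have : Nonempty (Fin (d i)) := Fin.pos_iff_nonempty.1 hi
  exact Units.ext ((algebraMap k (Matrix (Fin (d i)) (Fin (d i)) k)).injective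
    (congrArg Units.val (congr_fun h i)))

theorem IsBrick.stabilizer_eq_range {x : MRep Q k d} (hx : x.IsBrick) (hd : ∃ i, 0 < d i) :
    stabilizer (∀ i, GL (Fin (d i)) k) x = (scalarUnits : kˣ →* _).range := by
  ext g
  have hmem : g ∈ stabilizer _ x ↔ (fun i => (g i).1) ∈ x.endAlg := smul_eq_iff
  rw [hmem, hx, Algebra.mem_bot]
  refine ⟨fun ⟨c, hc⟩ => ?_, fun ⟨c, hc⟩ => ⟨c, hc ▸ rfl⟩⟩
  obtain ⟨i, hi⟩ := hd
  have : Nonempty (Fin (d i)) := Fin.pos_iff_nonempty.1 hi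
  have hc0 : c ≠ 0 := by
    rintro rfl
    exact (g i).ne_zero ((congr_fun hc i).symm.trans (congr_fun (map_zero _) i))
  exact ⟨Units.mk0 c hc0, funext fun j => Units.ext (congr_fun hc j)⟩

/-- Isomorphism classes of indecomposable representations of dimension vector `d`. -/
abbrev IndecIsoClass (Q : FinQuiver) (k : Type) [Field k] (d : Q.V → ℕ) : Type :=
  Quot fun x y : {x : MRep Q k d // MIndec x} => MIso x.1 y.1

/-- Burnside's lemma: the stabilizer of a brick consists of the nonzero scalars. -/
theorem natCard_indecIsoClass_mul (hd : ∃ i, 0 < d i)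
    (hb : ∀ x : MRep Q k d, MIndec x → x.IsBrick) :
    Nat.card {x : MRep Q k d // MIndec x} * Nat.card kˣ =
      Nat.card (IndecIsoClass Q k d) * Nat.card (∀ i, GL (Fin (d i)) k) := by
  have e : ∀ x : {x : MRep Q k d // MIndec x}, stabilizer (∀ i, GL (Fin (d i)) k) x ≃ kˣ := by
    intro x
    have hx : stabilizer (∀ i, GL (Fin (d i)) k) x = (scalarUnits : kˣ →* _).range := by
      rw [← (hb x.1 x.2).stabilizer_eq_range hd]
      exact Subgroup.ext fun g => Subtype.ext_iff
    exact (MulEquiv.subgroupCongr hx).toEquiv.trans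
      (MonoidHom.ofInjective (scalarUnits_injective hd)).toEquiv.symm
  rw [natCard_mul_natCard_of_stabilizer_equiv e]
  congr 1
  refine Nat.card_congr (Quot.congrRight fun x y => ?_)
  rw [orbitRel_apply, mem_orbit_symm, mem_orbit_iff, mIso_iff]
  exact exists_congr fun g => Subtype.ext_iff

section Galois

variable {K : Type} [Field K] [Algebra k K]

/-- The Galois group acts entrywise. -/
instance : MulAction Gal(K/k) (MRep Q K d) where
  smul σ x := x.map (σ : K →+* K)
  one_smul _ := rfl
  mul_smul _ _ _ := rfl

instance : MulAction Gal(K/k) {x : MRep Q K d // MIndec x} where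
  smul σ x := ⟨σ • x.1, mIndec_of_map (σ⁻¹ : Gal(K/k)).toRingEquiv.toRingHom
    ((inv_smul_smul σ x.1).symm ▸ x.2 : MIndec (σ⁻¹ • σ • x.1))⟩
  one_smul x := Subtype.ext (one_smul Gal(K/k) x.1)
  mul_smul σ τ x := Subtype.ext (mul_smul σ τ x.1)

theorem exists_mapRep_eq_iff [FiniteDimensional k K] [IsGalois k K] {x : MRep Q K d} :
    (∃ y : MRep Q k d, mapRep K y = x) ↔ ∀ σ : Gal(K/k), σ • x = x := by
  constructor
  · rintro ⟨y, rfl⟩ σ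
    exact funext fun a => Matrix.ext fun i j => σ.commutes _
  · intro h
    have hentry : ∀ a i j, ∃ c, algebraMap k K c = x a i j := fun a i j =>
      (IsGalois.mem_range_algebraMap_iff_fixed _).2 fun σ =>
        congr_fun (congr_fun (congr_fun (h σ) a) i) j
    choose y hy using hentry
    exact ⟨y, funext fun a => Matrix.ext (hy a)⟩

variable (K) in
theorem natCard_mIndec_eq_natCard_fixedPoints [FiniteDimensional k K] [IsGalois k K]
    (hd : ∃ i, 0 < d i) (hb : ∀ x : MRep Q k d, MIndec x → x.IsBrick) :
    Nat.card {x : MRep Q k d // MIndec x} =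
      Nat.card (fixedPoints Gal(K/k) {x : MRep Q K d // MIndec x}) := by
  refine Nat.card_congr (Equiv.ofBijective
    (fun y => ⟨⟨mapRep K y.1, ((hb _ y.2).mapRep hd).mIndec hd⟩,
      fun σ => Subtype.ext (exists_mapRep_eq_iff.1 ⟨y.1, rfl⟩ σ)⟩) ⟨fun y y' h => ?_, ?_⟩)
  · exact Subtype.ext (map_injective (algebraMap k K) (congrArg (fun z => z.1.1) h))
  · rintro ⟨⟨x, hx⟩, hfix⟩
    obtain ⟨y, rfl⟩ := exists_mapRep_eq_iff.2 fun σ => congrArg Subtype.val (hfix σ)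
    exact ⟨⟨y, mIndec_of_map (algebraMap k K) hx⟩, rfl⟩

variable (K) in
theorem natCard_mIndec_modEq [Finite K] [FiniteDimensional k K] [IsGalois k K]
    (hr : (Module.finrank k K).Prime) (hd : ∃ i, 0 < d i)
    (hb : ∀ x : MRep Q k d, MIndec x → x.IsBrick) :
    Nat.card {x : MRep Q K d // MIndec x} ≡ Nat.card {x : MRep Q k d // MIndec x}
      [MOD Module.finrank k K] := by
  have : Fact (Module.finrank k K).Prime := ⟨hr⟩
  have hgal : IsPGroup (Module.finrank k K) Gal(K/k) :=
    IsPGroup.of_card (n := 1) (by rw [IsGalois.card_aut_eq_finrank, pow_one])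
  rw [natCard_mIndec_eq_natCard_fixedPoints K hd hb]
  exact hgal.card_modEq_card_fixedPoints _

end Galois

end MRep

end GroupActions

section Decomposables

open Module

theorem natCard_range_mul_le {X Y H : Type*} [Finite X] {f : X → Y} {act : H → X → X}
    (hf : ∀ h x, f (act h x) = f x) (hact : ∀ x, Function.Injective fun h => act h x) :
    Nat.card (Set.range f) * Nat.card H ≤ Nat.card X := by
  choose s hs using fun y : Set.range f => y.2
  rw [← Nat.card_prod]
  refine Nat.card_le_card_of_injective (fun p => act p.2 (s p.1)) ?_
  rintro ⟨y, h⟩ ⟨y', h'⟩ heq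
  have hy : y = y' := Subtype.ext (by
    rw [← hs y, ← hs y', ← hf h, ← hf h' (s y')]; exact congrArg f heq)
  subst hy
  exact congrArg (Prod.mk y) (hact (s y) heq)

namespace MRep

variable {Q : FinQuiver} {k : Type} [Field k] {d β γ : Q.V → ℕ}

/-- Invertible matrices as linear automorphisms. -/
noncomputable def glEquiv (n : ℕ) : GL (Fin n) k ≃* ((Fin n → k) ≃ₗ[k] (Fin n → k)) :=
  Matrix.GeneralLinearGroup.toLin.trans (LinearMap.GeneralLinearGroup.generalLinearEquiv k _)

theorem smul_mulVec_glEquiv (g : ∀ i, GL (Fin (d i)) k) (x : MRep Q k d) (a : Q.A)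
    (v : Fin (d (Q.src a)) → k) :
    ((g • x) a).mulVec (glEquiv _ (g _) v) = glEquiv _ (g _) ((x a).mulVec v) := by
  change ((g • x) a).mulVec ((g _).1.mulVec v) = (g _).1.mulVec ((x a).mulVec v)
  rw [Matrix.mulVec_mulVec, Matrix.mulVec_mulVec, smul_eq_iff.1 rfl a]

/-- The direct sum of `y` and `z`, written in the coordinates given by `e`. -/
noncomputable def ofDirectSum (e : ∀ i, ((Fin (β i) → k) × (Fin (γ i) → k)) ≃ₗ[k] (Fin (d i) → k))
    (y : MRep Q k β) (z : MRep Q k γ) : MRep Q k d := fun a =>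
  LinearMap.toMatrix' ((e _).toLinearMap ∘ₗ (y.toLinRep a).prodMap (z.toLinRep a) ∘ₗ
    (e _).symm.toLinearMap)

theorem ofDirectSum_eq_iff {e : ∀ i, ((Fin (β i) → k) × (Fin (γ i) → k)) ≃ₗ[k] (Fin (d i) → k)}
    {y : MRep Q k β} {z : MRep Q k γ} {x : MRep Q k d} :
    ofDirectSum e y z = x ↔
      ∀ a u v, e _ ((y a).mulVec u, (z a).mulVec v) = (x a).mulVec (e _ (u, v)) := by
  refine funext_iff.trans (forall_congr' fun a => ?_)
  rw [ofDirectSum, ← Matrix.toLin'.injective.eq_iff, Matrix.toLin'_toMatrix', LinearMap.ext_iff,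
    (e _).surjective.forall, Prod.forall]
  refine forall₂_congr fun u v => ?_
  simp [toLinRep]

variable (d β γ) in
/-- Representations on `k^d` isomorphic to a direct sum of representations of dimension vectors
`β` and `γ`. -/
def directSums (k : Type) [Field k] : Set (MRep Q k d) :=
  Set.range fun p : (∀ i, ((Fin (β i) → k) × (Fin (γ i) → k)) ≃ₗ[k] (Fin (d i) → k)) ×
    MRep Q k β × MRep Q k γ => ofDirectSum p.1 p.2.1 p.2.2

theorem natCard_splittings (h : β + γ = d) :
    Nat.card (∀ i, ((Fin (β i) → k) × (Fin (γ i) → k)) ≃ₗ[k] (Fin (d i) → k)) =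
      Nat.card (∀ i, GL (Fin (d i)) k) := by
  have e₀ : ∀ i, ((Fin (β i) → k) × (Fin (γ i) → k)) ≃ₗ[k] (Fin (d i) → k) := fun i =>
    LinearEquiv.ofFinrankEq _ _ (by simp [← h])
  refine Nat.card_congr (Equiv.piCongrRight fun i => Equiv.trans ?_ (glEquiv (d i)).toEquiv.symm)
  exact ⟨fun e => (e₀ i).symm.trans e, fun g => (e₀ i).trans g,
    fun e => by ext1; simp, fun g => by ext1; simp⟩

theorem natCard_directSums_mul_le [Finite k] (h : β + γ = d) :
    Nat.card (directSums d β γ k) *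
      (Nat.card (∀ i, GL (Fin (β i)) k) * Nat.card (∀ i, GL (Fin (γ i)) k)) ≤
    Nat.card (∀ i, GL (Fin (d i)) k) * (Nat.card (MRep Q k β) * Nat.card (MRep Q k γ)) := by
  have : ∀ i, Finite (((Fin (β i) → k) × (Fin (γ i) → k)) ≃ₗ[k] (Fin (d i) → k)) := fun i =>
    DFunLike.finite _
  rw [← natCard_splittings h, ← Nat.card_prod (MRep Q k β), ← Nat.card_prod (∀ i, GL (Fin (β i)) k),
    ← Nat.card_prod (∀ i, _ ≃ₗ[k] (Fin (d i) → k))]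
  refine natCard_range_mul_le (act := fun (g : (∀ i, GL (Fin (β i)) k) × ∀ i, GL (Fin (γ i)) k)
    (p : (∀ i, ((Fin (β i) → k) × (Fin (γ i) → k)) ≃ₗ[k] (Fin (d i) → k)) ×
      MRep Q k β × MRep Q k γ) =>
      (fun i => ((glEquiv _ (g.1 i)).prodCongr (glEquiv _ (g.2 i))).symm.trans (p.1 i),
        g.1 • p.2.1, g.2 • p.2.2)) ?_ ?_
  · rintro ⟨g, h⟩ ⟨e, y, z⟩
    refine ofDirectSum_eq_iff.2 fun a u v => ?_
    obtain ⟨u, rfl⟩ := (glEquiv _ (g _)).surjective u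
    obtain ⟨v, rfl⟩ := (glEquiv _ (h _)).surjective v
    rw [smul_mulVec_glEquiv, smul_mulVec_glEquiv]
    simpa using ofDirectSum_eq_iff.1 (rfl : ofDirectSum e y z = _) a u v
  · rintro ⟨e, y, z⟩ ⟨g, h⟩ ⟨g', h'⟩ heq
    have hgh : ∀ i u v, (glEquiv _ (g⁻¹ i) u, glEquiv _ (h⁻¹ i) v) =
        (glEquiv _ (g'⁻¹ i) u, glEquiv _ (h'⁻¹ i) v) := fun i u v => by
      have := LinearEquiv.congr_fun (congr_fun (congrArg Prod.fst heq) i) (u, v)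
      simpa using this
    have hg : g = g' := inv_injective <| funext fun i => (glEquiv _).injective <|
      LinearEquiv.ext fun u => congrArg Prod.fst (hgh i u 0)
    have hh : h = h' := inv_injective <| funext fun i => (glEquiv _).injective <|
      LinearEquiv.ext fun v => congrArg Prod.snd (hgh i 0 v)
    rw [hg, hh]

theorem mem_directSums_of_isCompl {x : MRep Q k d} {U W : ∀ i, Submodule k (Fin (d i) → k)}
    (hU : MSub x U) (hW : MSub x W) (hUW : ∀ i, IsCompl (U i) (W i)) :
    x ∈ directSums d (fun i => finrank k (U i)) (fun i => finrank k (W i)) k := by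
  let bU i := (finBasis k (U i)).equivFun
  let bW i := (finBasis k (W i)).equivFun
  refine ⟨(fun i => ((bU i).symm.prodCongr (bW i).symm).trans
      (Submodule.prodEquivOfIsCompl _ _ (hUW i)),
    fun a => LinearMap.toMatrix' ((bU _).toLinearMap ∘ₗ (x a).mulVecLin.restrict (hU a) ∘ₗ
      (bU _).symm.toLinearMap),
    fun a => LinearMap.toMatrix' ((bW _).toLinearMap ∘ₗ (x a).mulVecLin.restrict (hW a) ∘ₗ
      (bW _).symm.toLinearMap)), ofDirectSum_eq_iff.2 fun a u v => ?_⟩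
  simp only [LinearMap.toMatrix'_mulVec, LinearMap.comp_apply, LinearEquiv.coe_coe,
    LinearEquiv.trans_apply, LinearEquiv.prodCongr_apply, LinearEquiv.symm_apply_apply,
    Submodule.coe_prodEquivOfIsCompl', Matrix.mulVec_add]
  rfl

theorem exists_mem_directSums {x : MRep Q k d} (hd : ∃ i, 0 < d i) (hx : ¬ MIndec x) :
    ∃ β ∈ Finset.Ioo 0 d, x ∈ directSums d β (d - β) k := by
  have hx : ∃ U W : ∀ i, Submodule k (Fin (d i) → k), MSub x U ∧ MSub x W ∧
      (∀ i, IsCompl (U i) (W i)) ∧ (¬ ∀ i, U i = ⊥) ∧ ¬ ∀ i, W i = ⊥ := by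
    simpa only [MIndec, hd, true_and, not_forall, not_or, exists_prop] using hx
  obtain ⟨U, W, hU, hW, hUW, hU0, hW0⟩ := hx
  have hsum : ∀ i, finrank k (U i) + finrank k (W i) = d i := fun i =>
    (Submodule.finrank_add_eq_of_isCompl (hUW i)).trans (finrank_fin_fun k)
  have hdim : (fun i => finrank k (W i)) = d - fun i => finrank k (U i) :=
    funext fun i => by simp [← hsum i]
  refine ⟨fun i => finrank k (U i), Finset.mem_Ioo.2 ⟨?_, ?_⟩,
    hdim ▸ mem_directSums_of_isCompl hU hW hUW⟩
  · refine pos_iff_ne_zero.2 fun h => hU0 fun i => Submodule.finrank_eq_zero.1 (congr_fun h i)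
  · refine lt_of_le_of_ne (fun i => (Nat.le_add_right _ _).trans (hsum i).le) fun h =>
      hW0 fun i => Submodule.finrank_eq_zero.1 ?_
    rw [← Nat.add_eq_left (a := finrank k (U i)), hsum i]
    exact (congr_fun h i).symm

end MRep

end Decomposables

section Counting

open Filter Topology

/-- The finite `q`-Pochhammer symbol `(u; u)ₙ = (1 - u)(1 - u²)⋯(1 - uⁿ)`. -/
noncomputable def qPochhammer (n : ℕ) (u : ℝ) : ℝ := ∏ j ∈ Finset.range n, (1 - u ^ (j + 1))

theorem half_pow_le_qPochhammer (n : ℕ) {u : ℝ} (h0 : 0 ≤ u) (h1 : u ≤ 1 / 2) :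
    (1 / 2) ^ n ≤ qPochhammer n u := by
  rw [← Finset.card_range n, ← Finset.prod_const, Finset.card_range]
  refine Finset.prod_le_prod (fun _ _ => by positivity) fun j _ => ?_
  have : u ^ (j + 1) ≤ u := pow_le_of_le_one h0 (h1.trans (by norm_num)) j.succ_ne_zero
  linarith

theorem qPochhammer_zero_right (n : ℕ) : qPochhammer n 0 = 1 := by simp [qPochhammer]

theorem hasDerivAt_prod_of_eq_one {ι : Type*} {s : Finset ι} {f : ι → ℝ → ℝ} {c : ι → ℝ} {x : ℝ}
    (h : ∀ i ∈ s, HasDerivAt (f i) (c i) x) (h1 : ∀ i ∈ s, f i x = 1) :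
    HasDerivAt (fun u => ∏ i ∈ s, f i u) (∑ i ∈ s, c i) x := by
  classical
  refine (HasDerivAt.fun_finsetProd h).congr_deriv (Finset.sum_congr rfl fun i _ => ?_)
  rw [Finset.prod_eq_one fun j hj => h1 j (Finset.mem_of_mem_erase hj), one_smul]

theorem hasDerivAt_qPochhammer {n : ℕ} (hn : 0 < n) : HasDerivAt (qPochhammer n) (-1) 0 := by
  have hfactor : ∀ j ∈ Finset.range n,
      HasDerivAt (fun u : ℝ => 1 - u ^ (j + 1)) (if j = 0 then -1 else 0) 0 := fun j _ =>
    ((hasDerivAt_pow (j + 1) (0 : ℝ)).const_sub 1).congr_deriv (by cases j <;> simp)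
  refine (hasDerivAt_prod_of_eq_one hfactor fun j _ => by simp).congr_deriv ?_
  rw [Finset.sum_ite_eq', if_pos (Finset.mem_range.2 hn)]

theorem tendsto_mul_div_prod_qPochhammer_sub {ι : Type*} [Fintype ι] {d : ι → ℕ}
    (hd : ∀ i, 0 < d i) :
    Tendsto (fun q : ℝ => (q - 1) / (∏ i, qPochhammer (d i) q⁻¹) - q) atTop
      (𝓝 (Fintype.card ι - 1)) := by
  have hD : HasDerivAt (fun u => ∏ i, qPochhammer (d i) u) (∑ _i : ι, -1) 0 :=
    hasDerivAt_prod_of_eq_one (fun i _ => hasDerivAt_qPochhammer (hd i))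
      fun i _ => qPochhammer_zero_right _
  have hD0 : ∏ i, qPochhammer (d i) 0 = 1 :=
    Finset.prod_eq_one fun i _ => qPochhammer_zero_right _
  have hderiv :
      HasDerivAt (fun u => (1 - u) / ∏ i, qPochhammer (d i) u) (Fintype.card ι - 1) 0 := by
    refine (((hasDerivAt_id (0 : ℝ)).const_sub 1).fun_div hD (by simp [hD0])).congr_deriv ?_
    simp [hD0, neg_add_eq_sub]
  refine (hderiv.tendsto_slope_zero_right.comp tendsto_inv_atTop_nhdsGT_zero).congr' ?_
  filter_upwards [eventually_ne_atTop 0] with q hq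
  simp only [Function.comp_apply, inv_inv, zero_add, hD0, sub_zero, div_one, smul_eq_mul]
  field_simp

namespace MRep

theorem natCard_mRep {Q : FinQuiver} {k : Type} (d : Q.V → ℕ) :
    Nat.card (MRep Q k d) = Nat.card k ^ ∑ a, d (Q.src a) * d (Q.tgt a) := by
  change Nat.card (∀ a : Q.A, Fin (d (Q.tgt a)) → Fin (d (Q.src a)) → k) = _
  simp only [Nat.card_fun, Nat.card_pi, Nat.card_fin, ← pow_mul, Finset.prod_pow_eq_pow_sum]

end MRep

theorem natCard_GL_fin (k : Type*) [Field k] [Finite k] (n : ℕ) :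
    (Nat.card (GL (Fin n) k) : ℝ) = Nat.card k ^ (n * n) * qPochhammer n (Nat.card k : ℝ)⁻¹ := by
  cases nonempty_fintype k
  have hq : (Nat.card k : ℝ) ≠ 0 := by exact_mod_cast Nat.card_pos.ne'
  have hfactor : ∀ j ∈ Finset.range n, ((Nat.card k ^ n - Nat.card k ^ j : ℕ) : ℝ) =
      Nat.card k ^ n * (1 - (Nat.card k : ℝ)⁻¹ ^ (n - 1 - j + 1)) := fun j hj => by
    have hj : j < n := Finset.mem_range.1 hj
    rw [Nat.cast_sub (Nat.pow_le_pow_right Nat.card_pos hj.le), Nat.cast_pow, Nat.cast_pow,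
      mul_sub, mul_one, show n - 1 - j + 1 = n - j by lia, inv_pow,
      ← pow_sub₀ _ hq (Nat.sub_le n j), Nat.sub_sub_self hj.le]
  rw [Matrix.card_GL_field, ← Nat.card_eq_fintype_card,
    ← Finset.prod_range fun j => Nat.card k ^ n - Nat.card k ^ j, Nat.cast_prod,
    Finset.prod_congr rfl hfactor, Finset.prod_mul_distrib, Finset.prod_const, Finset.card_range,
    ← pow_mul, qPochhammer, Finset.prod_range_reflect fun j => 1 - (Nat.card k : ℝ)⁻¹ ^ (j + 1)]

theorem natCard_pi_GL_fin {V : Type*} [Fintype V] (k : Type*) [Field k] [Finite k] (d : V → ℕ) :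
    (Nat.card (∀ i, GL (Fin (d i)) k) : ℝ) =
      Nat.card k ^ (∑ i, d i * d i) * ∏ i, qPochhammer (d i) (Nat.card k : ℝ)⁻¹ := by
  simp only [Nat.card_pi, Nat.cast_prod, natCard_GL_fin, Finset.prod_mul_distrib,
    Finset.prod_pow_eq_pow_sum]

theorem natCard_inv_le_half (k : Type*) [Field k] [Finite k] : (Nat.card k : ℝ)⁻¹ ≤ 1 / 2 := by
  rw [one_div]
  exact inv_anti₀ two_pos (by exact_mod_cast Finite.one_lt_card (α := k))

namespace MRep

variable {Q : FinQuiver} {k : Type} [Field k] [Finite k]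

variable (k) in
theorem natCard_mul_prod_qPochhammer (d : Q.V → ℕ) :
    (Nat.card (MRep Q k d) : ℝ) * ∏ i, qPochhammer (d i) (Nat.card k : ℝ)⁻¹ =
      (Nat.card k : ℝ) ^ (-Q.titsForm fun i => (d i : ℤ)) * Nat.card (∀ i, GL (Fin (d i)) k) := by
  have hq : (Nat.card k : ℝ) ≠ 0 := by exact_mod_cast Nat.card_pos.ne'
  have hexp : -Q.titsForm (fun i => (d i : ℤ)) =
      ((∑ a, d (Q.src a) * d (Q.tgt a) : ℕ) : ℤ) - (∑ i, d i * d i : ℕ) := by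
    simp [FinQuiver.titsForm, FinQuiver.eulerForm]
  rw [natCard_mRep, natCard_pi_GL_fin, hexp, zpow_sub₀ hq, zpow_natCast, zpow_natCast, Nat.cast_pow]
  field_simp

theorem natCard_le_of_one_le_titsForm {β : Q.V → ℕ} (h : 1 ≤ Q.titsForm fun i => (β i : ℤ)) :
    (Nat.card (MRep Q k β) : ℝ) ≤
      (Nat.card k : ℝ)⁻¹ * 2 ^ (∑ i, β i) * Nat.card (∀ i, GL (Fin (β i)) k) := by
  have hq : (1 : ℝ) ≤ Nat.card k := by exact_mod_cast Nat.card_pos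
  have hD : (1 / 2 : ℝ) ^ ∑ i, β i ≤ ∏ i, qPochhammer (β i) (Nat.card k : ℝ)⁻¹ := by
    rw [← Finset.prod_pow_eq_pow_sum]
    exact Finset.prod_le_prod (fun _ _ => by positivity) fun i _ =>
      half_pow_le_qPochhammer _ (by positivity) (natCard_inv_le_half k)
  calc (Nat.card (MRep Q k β) : ℝ)
      = 2 ^ (∑ i, β i) * (Nat.card (MRep Q k β) * (1 / 2) ^ ∑ i, β i) := by
        rw [mul_left_comm, ← mul_pow]; norm_num
    _ ≤ 2 ^ (∑ i, β i) * (Nat.card (MRep Q k β) * ∏ i, qPochhammer (β i) (Nat.card k : ℝ)⁻¹) := by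
        gcongr
    _ ≤ 2 ^ (∑ i, β i) * ((Nat.card k : ℝ)⁻¹ * Nat.card (∀ i, GL (Fin (β i)) k)) := by
        rw [natCard_mul_prod_qPochhammer k, ← zpow_neg_one]
        gcongr
    _ = (Nat.card k : ℝ)⁻¹ * 2 ^ (∑ i, β i) * Nat.card (∀ i, GL (Fin (β i)) k) := by ring

theorem natCard_directSums_le {d β γ : Q.V → ℕ} (h : β + γ = d)
    (hβ : 1 ≤ Q.titsForm fun i => (β i : ℤ)) (hγ : 1 ≤ Q.titsForm fun i => (γ i : ℤ)) :
    (Nat.card (directSums d β γ k) : ℝ) ≤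
      (Nat.card k : ℝ)⁻¹ ^ 2 * 2 ^ (∑ i, d i) * Nat.card (∀ i, GL (Fin (d i)) k) := by
  have hGβ : (0 : ℝ) < Nat.card (∀ i, GL (Fin (β i)) k) := by exact_mod_cast Nat.card_pos
  have hGγ : (0 : ℝ) < Nat.card (∀ i, GL (Fin (γ i)) k) := by exact_mod_cast Nat.card_pos
  have hsum : ∑ i, d i = ∑ i, β i + ∑ i, γ i := by
    rw [← h, ← Finset.sum_add_distrib]; rfl
  refine le_of_mul_le_mul_right ?_ (mul_pos hGβ hGγ)
  calc (Nat.card (directSums d β γ k) : ℝ) *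
        (Nat.card (∀ i, GL (Fin (β i)) k) * Nat.card (∀ i, GL (Fin (γ i)) k))
      ≤ Nat.card (∀ i, GL (Fin (d i)) k) * (Nat.card (MRep Q k β) * Nat.card (MRep Q k γ)) := by
        exact_mod_cast natCard_directSums_mul_le h
    _ ≤ Nat.card (∀ i, GL (Fin (d i)) k) *
        (((Nat.card k : ℝ)⁻¹ * 2 ^ (∑ i, β i) * Nat.card (∀ i, GL (Fin (β i)) k)) *
          ((Nat.card k : ℝ)⁻¹ * 2 ^ (∑ i, γ i) * Nat.card (∀ i, GL (Fin (γ i)) k))) := by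
        gcongr
        exacts [natCard_le_of_one_le_titsForm hβ, natCard_le_of_one_le_titsForm hγ]
    _ = _ := by rw [hsum]; ring

/-- The two summands of a decomposable have Tits form at least `1`, and each contributes a factor
`q⁻¹`. -/
theorem natCard_not_mIndec_le [Nonempty Q.V] {δ : Q.V → ℕ} (hδ : Q.IsMinimalImaginaryRoot δ) :
    (Nat.card {x : MRep Q k δ // ¬ MIndec x} : ℝ) ≤
      (Finset.Ioo 0 δ).card * 2 ^ (∑ i, δ i) * (Nat.card k : ℝ)⁻¹ ^ 2 *
        Nat.card (∀ i, GL (Fin (δ i)) k) := by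
  have hcover : {x : MRep Q k δ | ¬ MIndec x} ⊆
      ⋃ β ∈ Finset.Ioo 0 δ, directSums δ β (δ - β) k := fun x hx => by
    obtain ⟨i⟩ := ‹Nonempty Q.V›
    simpa only [Set.mem_iUnion, exists_prop] using exists_mem_directSums ⟨i, hδ.pos i⟩ hx
  have hle : ∀ β ∈ Finset.Ioo 0 δ, (Nat.card (directSums δ β (δ - β) k) : ℝ) ≤
      (Nat.card k : ℝ)⁻¹ ^ 2 * 2 ^ (∑ i, δ i) * Nat.card (∀ i, GL (Fin (δ i)) k) := fun β hβ => by
    obtain ⟨h0, h1⟩ := Finset.mem_Ioo.1 hβ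
    have hsum : β + (δ - β) = δ := add_tsub_cancel_of_le h1.le
    refine natCard_directSums_le hsum (hδ.one_le_titsForm h1.le h0.ne' h1.ne)
      (hδ.one_le_titsForm tsub_le_self (fun h => h1.not_ge (tsub_eq_zero_iff_le.1 h)) fun h => ?_)
    rw [h, add_eq_right] at hsum
    exact h0.ne' hsum
  calc (Nat.card {x : MRep Q k δ // ¬ MIndec x} : ℝ)
      ≤ ∑ β ∈ Finset.Ioo 0 δ, (Nat.card (directSums δ β (δ - β) k) : ℝ) := by
        exact_mod_cast (Set.ncard_le_ncard hcover (Set.toFinite _)).trans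
          (Finset.set_ncard_biUnion_le _ _)
    _ ≤ ∑ β ∈ Finset.Ioo 0 δ, ((Nat.card k : ℝ)⁻¹ ^ 2 * 2 ^ (∑ i, δ i) *
        Nat.card (∀ i, GL (Fin (δ i)) k)) := Finset.sum_le_sum hle
    _ = _ := by rw [Finset.sum_const, nsmul_eq_mul]; ring

variable (k) in
theorem natCard_indecIsoClass_eq [Nonempty Q.V] {δ : Q.V → ℕ} (hδ : Q.IsMinimalImaginaryRoot δ) :
    (Nat.card (IndecIsoClass Q k δ) : ℝ) =
      (Nat.card k - 1) / ∏ i, qPochhammer (δ i) (Nat.card k : ℝ)⁻¹ -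
        (Nat.card k - 1) * Nat.card {x : MRep Q k δ // ¬ MIndec x} /
          Nat.card (∀ i, GL (Fin (δ i)) k) := by
  have hG : (Nat.card (∀ i, GL (Fin (δ i)) k) : ℝ) ≠ 0 := by exact_mod_cast Nat.card_pos.ne'
  have hburnside : (Nat.card {x : MRep Q k δ // MIndec x} : ℝ) * (Nat.card k - 1) =
      Nat.card (IndecIsoClass Q k δ) * Nat.card (∀ i, GL (Fin (δ i)) k) := by
    obtain ⟨i⟩ := ‹Nonempty Q.V›
    rw [← Nat.cast_mul, ← natCard_indecIsoClass_mul ⟨i, hδ.pos i⟩ fun x : MRep Q k δ =>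
      isBrick_of_mIndec hδ le_rfl, Nat.card_units, Nat.cast_mul, Nat.cast_sub Nat.card_pos,
      Nat.cast_one]
  have hall : (Nat.card {x : MRep Q k δ // MIndec x} : ℝ) +
      Nat.card {x : MRep Q k δ // ¬ MIndec x} = Nat.card (MRep Q k δ) := by
    classical
    rw [← Nat.cast_add, ← Nat.card_sum, Nat.card_congr (Equiv.sumCompl _)]
  have hmass := natCard_mul_prod_qPochhammer k δ
  rw [hδ.titsForm_self, neg_zero, zpow_zero, one_mul] at hmass
  have hR := left_ne_zero_of_mul (hmass.trans_ne hG)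
  rw [eq_sub_iff_add_eq]
  calc (Nat.card (IndecIsoClass Q k δ) : ℝ) + (Nat.card k - 1) *
        Nat.card {x : MRep Q k δ // ¬ MIndec x} / Nat.card (∀ i, GL (Fin (δ i)) k)
      = (Nat.card k - 1) * Nat.card (MRep Q k δ) / Nat.card (∀ i, GL (Fin (δ i)) k) := by
        rw [← hall, mul_add, add_div, mul_comm _ (Nat.card {x // MIndec x} : ℝ),
          hburnside, mul_div_cancel_right₀ _ hG]
    _ = (Nat.card k - 1) / ∏ i, qPochhammer (δ i) (Nat.card k : ℝ)⁻¹ := by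
        rw [← hmass, mul_comm (Nat.card (MRep Q k δ) : ℝ), mul_div_mul_right _ _ hR]

theorem abs_natCard_indecIsoClass_sub_le [Nonempty Q.V] {δ : Q.V → ℕ}
    (hδ : Q.IsMinimalImaginaryRoot δ) :
    |(Nat.card (IndecIsoClass Q k δ) : ℝ) -
        (Nat.card k - 1) / ∏ i, qPochhammer (δ i) (Nat.card k : ℝ)⁻¹| ≤
      (Finset.Ioo 0 δ).card * 2 ^ (∑ i, δ i) / Nat.card k := by
  have hq : (1 : ℝ) ≤ Nat.card k := by exact_mod_cast Nat.card_pos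
  have hG : (0 : ℝ) < Nat.card (∀ i, GL (Fin (δ i)) k) := by exact_mod_cast Nat.card_pos
  have hq1 : (0 : ℝ) ≤ Nat.card k - 1 := sub_nonneg.2 hq
  rw [natCard_indecIsoClass_eq k hδ, sub_sub_cancel_left, abs_neg,
    abs_of_nonneg (div_nonneg (mul_nonneg hq1 (Nat.cast_nonneg _)) hG.le), div_le_iff₀ hG]
  calc ((Nat.card k : ℝ) - 1) * Nat.card {x : MRep Q k δ // ¬ MIndec x}
      ≤ Nat.card k * ((Finset.Ioo 0 δ).card * 2 ^ (∑ i, δ i) * (Nat.card k : ℝ)⁻¹ ^ 2 *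
        Nat.card (∀ i, GL (Fin (δ i)) k)) := by
        gcongr
        exacts [by linarith, natCard_not_mIndec_le hδ]
    _ = _ := by field_simp

theorem eventually_natCard_indecIsoClass_add_one [Nonempty Q.V] {δ : Q.V → ℕ}
    (hδ : Q.IsMinimalImaginaryRoot δ) :
    ∀ᶠ q : ℕ in atTop, ∀ (K : Type) [Field K] [Finite K], Nat.card K = q →
      Nat.card (IndecIsoClass Q K δ) + 1 = q + Fintype.card Q.V := by
  have hmain := (tendsto_mul_div_prod_qPochhammer_sub hδ.pos).comp
    (tendsto_natCast_atTop_atTop (R := ℝ))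
  have herror := (tendsto_const_div_atTop_nhds_zero_nat
    ((Finset.Ioo 0 δ).card * 2 ^ (∑ i, δ i) : ℝ))
  filter_upwards [Metric.tendsto_nhds.1 hmain (1 / 2) (by norm_num),
    herror.eventually_lt_const (show (0 : ℝ) < 1 / 2 by norm_num)] with q hmain herror K _ _ hK
  have hN := abs_natCard_indecIsoClass_sub_le (k := K) hδ
  rw [hK] at hN
  have hdist :
      |((Nat.card (IndecIsoClass Q K δ) + 1 : ℤ) - (q + Fintype.card Q.V : ℤ) : ℝ)| < 1 := by
    rw [Real.dist_eq, Function.comp_apply, abs_lt] at hmain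
    rw [abs_le] at hN
    push_cast
    exact abs_lt.2 ⟨by linarith, by linarith⟩
  have := Int.abs_lt_one_iff.1 (by exact_mod_cast hdist)
  lia

end MRep

end Counting

section FrobeniusCongruence

open Module

theorem exists_finite_field_finrank_eq (k : Type) [Field k] [Finite k] {n : ℕ} (hn : n ≠ 0) :
    ∃ (K : Type) (_ : Field K) (_ : Algebra k K) (_ : Finite K), finrank k K = n := by
  obtain ⟨p, hp⟩ := CharP.exists k
  have : Fact p.Prime := ⟨CharP.char_is_prime k p⟩
  have : NeZero n := ⟨hn⟩
  exact ⟨FiniteField.Extension k p n, inferInstance, inferInstance, Module.finite_of_finite k,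
    FiniteField.finrank_extension k p n⟩

variable {k K : Type*} [Field k] [Field K] [Algebra k K]

theorem natCard_modEq_of_finrank_prime (hr : (finrank k K).Prime) :
    Nat.card K ≡ Nat.card k [MOD finrank k K] := by
  have : Fact (finrank k K).Prime := ⟨hr⟩
  have : FiniteDimensional k K := FiniteDimensional.of_finrank_pos hr.pos
  rw [Module.natCard_eq_pow_finrank (K := k), ← ZMod.natCast_eq_natCast_iff, Nat.cast_pow,
    ZMod.pow_card]

variable [Finite k] [Finite K]

theorem natCard_units_modEq_of_finrank_prime (hr : (finrank k K).Prime) :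
    Nat.card Kˣ ≡ Nat.card kˣ [MOD finrank k K] := by
  refine Nat.ModEq.add_right_cancel' 1 ?_
  rw [Nat.card_units, Nat.card_units, Nat.sub_add_cancel Nat.card_pos,
    Nat.sub_add_cancel Nat.card_pos]
  exact natCard_modEq_of_finrank_prime hr

theorem natCard_GL_fin_modEq_of_finrank_prime (hr : (finrank k K).Prime) (n : ℕ) :
    Nat.card (GL (Fin n) K) ≡ Nat.card (GL (Fin n) k) [MOD finrank k K] := by
  cases nonempty_fintype k
  cases nonempty_fintype K
  have hq := (ZMod.natCast_eq_natCast_iff _ _ _).2 (natCard_modEq_of_finrank_prime hr)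
  rw [← ZMod.natCast_eq_natCast_iff, Matrix.card_GL_field, Matrix.card_GL_field, Nat.cast_prod,
    Nat.cast_prod, ← Nat.card_eq_fintype_card, ← Nat.card_eq_fintype_card]
  refine Finset.prod_congr rfl fun i _ => ?_
  rw [Nat.cast_sub (Nat.pow_le_pow_right Nat.card_pos i.2.le),
    Nat.cast_sub (Nat.pow_le_pow_right Nat.card_pos i.2.le)]
  simp only [Nat.cast_pow, hq]

theorem natCard_pi_GL_fin_modEq_of_finrank_prime {V : Type*} [Finite V]
    (hr : (finrank k K).Prime) (d : V → ℕ) :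
    Nat.card (∀ i, GL (Fin (d i)) K) ≡ Nat.card (∀ i, GL (Fin (d i)) k) [MOD finrank k K] := by
  cases nonempty_fintype V
  rw [Nat.card_pi, Nat.card_pi]
  exact Nat.ModEq.prod fun i _ => natCard_GL_fin_modEq_of_finrank_prime hr (d i)

end FrobeniusCongruence

namespace MRep

open Module

variable {Q : FinQuiver} {k : Type} [Field k] [Finite k] {δ : Q.V → ℕ}

theorem natCard_indecIsoClass_modEq [Nonempty Q.V] (hδ : Q.IsMinimalImaginaryRoot δ)
    (K : Type) [Field K] [Finite K] [Algebra k K] (hr : (finrank k K).Prime)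
    (hG : (finrank k K).Coprime (Nat.card (∀ i, GL (Fin (δ i)) k))) :
    Nat.card (IndecIsoClass Q K δ) ≡ Nat.card (IndecIsoClass Q k δ) [MOD finrank k K] := by
  obtain ⟨i⟩ := ‹Nonempty Q.V›
  have hd : ∃ i, 0 < δ i := ⟨i, hδ.pos i⟩
  have : FiniteDimensional k K := Module.Finite.of_finite
  refine Nat.ModEq.cancel_right_of_coprime hG ?_
  calc Nat.card (IndecIsoClass Q K δ) * Nat.card (∀ i, GL (Fin (δ i)) k)
      ≡ Nat.card (IndecIsoClass Q K δ) * Nat.card (∀ i, GL (Fin (δ i)) K) [MOD finrank k K] :=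
        (natCard_pi_GL_fin_modEq_of_finrank_prime hr δ).symm.mul_left _
    _ = Nat.card {x : MRep Q K δ // MIndec x} * Nat.card Kˣ :=
        (natCard_indecIsoClass_mul hd fun _ => isBrick_of_mIndec hδ le_rfl).symm
    _ ≡ Nat.card {x : MRep Q k δ // MIndec x} * Nat.card kˣ [MOD finrank k K] :=
        (natCard_mIndec_modEq K hr hd fun _ => isBrick_of_mIndec hδ le_rfl).mul
          (natCard_units_modEq_of_finrank_prime hr)
    _ = Nat.card (IndecIsoClass Q k δ) * Nat.card (∀ i, GL (Fin (δ i)) k) :=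
        natCard_indecIsoClass_mul hd fun _ => isBrick_of_mIndec hδ le_rfl

/-- The extension of prime degree `r` is a large field, and the count over it is congruent to the
count over `k` modulo `r`; for `r` large enough, a congruence modulo `r` is an equality. -/
theorem natCard_indecIsoClass_add_one [Nonempty Q.V] (hδ : Q.IsMinimalImaginaryRoot δ) :
    Nat.card (IndecIsoClass Q k δ) + 1 = Nat.card k + Fintype.card Q.V := by
  obtain ⟨R, hR⟩ := Filter.eventually_atTop.1 (eventually_natCard_indecIsoClass_add_one hδ)
  obtain ⟨r, hrle, hr⟩ := Nat.exists_infinite_primes (R + Nat.card (∀ i, GL (Fin (δ i)) k) +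
    Nat.card (IndecIsoClass Q k δ) + Nat.card k + Fintype.card Q.V + 2)
  obtain ⟨K, _, _, _, rfl⟩ := exists_finite_field_finrank_eq k hr.ne_zero
  have hlarge : R ≤ Nat.card K := by
    have : FiniteDimensional k K := Module.Finite.of_finite
    rw [Module.natCard_eq_pow_finrank (K := k)]
    exact (show R ≤ finrank k K by lia).trans (Nat.lt_pow_self Finite.one_lt_card).le
  have hG : (finrank k K).Coprime (Nat.card (∀ i, GL (Fin (δ i)) k)) :=
    Nat.coprime_of_lt_prime Nat.card_pos.ne' (by lia) hr
  have hcongr : Nat.card (IndecIsoClass Q k δ) + 1 ≡ Nat.card k + Fintype.card Q.V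
      [MOD finrank k K] :=
    calc Nat.card (IndecIsoClass Q k δ) + 1
        ≡ Nat.card (IndecIsoClass Q K δ) + 1 [MOD finrank k K] :=
          (natCard_indecIsoClass_modEq hδ K hr hG).symm.add_right 1
      _ = Nat.card K + Fintype.card Q.V := hR _ hlarge K rfl
      _ ≡ Nat.card k + Fintype.card Q.V [MOD finrank k K] :=
          (natCard_modEq_of_finrank_prime hr).add_right _
  exact hcongr.eq_of_lt_of_lt (by lia) (by lia)

end MRep

theorem kac_conjecture_dimension_delta_general (Q : FinQuiver) [Nonempty Q.V] {δ : Q.V → ℕ}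
    (hδ : Q.IsMinimalImaginaryRoot δ) (k : Type) [Field k] :
    (∀ [Finite k], Nat.card (MRep.IndecIsoClass Q k δ) = Nat.card k + (Fintype.card Q.V - 1)) ∧
      ∀ x : MRep Q k δ, MIndec x → MAbsIndec x := by
  obtain ⟨i⟩ := ‹Nonempty Q.V›
  refine ⟨fun {_} => ?_, fun x hx => ⟨hx, ?_⟩⟩
  · have := MRep.natCard_indecIsoClass_add_one (k := k) hδ
    have := Fintype.card_pos (α := Q.V)
    lia
  · exact ((MRep.isBrick_of_mIndec hδ le_rfl hx).mapRep ⟨i, hδ.pos i⟩).mIndec ⟨i, hδ.pos i⟩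

/-- Over a finite field `F_q`, the number of isomorphism classes of indecomposable
representations of an affine quiver with `n + 1` vertices in dimension vector `δ`
(the minimal positive imaginary root) is exactly `q + n`, and every indecomposable
representation of dimension vector `δ` is absolutely indecomposable.  In particular
`a_δ(q) = q + dim g_δ`, confirming Kac's conjecture in dimension `δ`. -/
theorem kac_conjecture_dimension_delta
    (Q : AffineQuiver) (k : Type) [Field k] [Fintype k] :
    Nat.card (Quot (fun x y : {x : MRep Q.toFinQuiver k (fun i => (Q.δ i).toNat) // MIndec x} =>
        MIso x.1 y.1))
      = Fintype.card k + (Fintype.card Q.V - 1) ∧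
    ∀ x : MRep Q.toFinQuiver k (fun i => (Q.δ i).toNat), MIndec x → MAbsIndec x := by
  have := Q.connected.nonempty
  have h := kac_conjecture_dimension_delta_general Q.toFinQuiver Q.isMinimalImaginaryRoot k
  exact ⟨h.1.trans (congrArg (· + _) Nat.card_eq_fintype_card), h.2⟩
end
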